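/- Let R be a Cohen-Macaulay ring (i.e., R_p is a Cohen-Macaulay local ring for every prime p). The maps φ and ψ, defined by φ(X)(p) = ht p − min_{X∈X} depth X_p and ψ(f) = { M ∈ mod R : depth M_p ≥ ht p − f(p) for all p ∈ Spec R }, are mutually inverse bijections between the set of dominant resolving subcategories of mod R and the set of grade consistent functions on Spec R. -/

import Mathlib

universe u

open CategoryTheory

namespace ResolvPaper

variable (R : Type u) [CommRing R]

/-- `IsSES f g` means `0 → A → B → C → 0` is a short exact sequence. -/
def IsSES {R : Type u} [CommRing R] {A B C : Type u} [AddCommGroup A] [Module R A]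
    [AddCommGroup B] [Module R B] [AddCommGroup C] [Module R C]
    (f : A →ₗ[R] B) (g : B →ₗ[R] C) : Prop :=
  Function.Injective f ∧ Function.Surjective g ∧ LinearMap.range f = LinearMap.ker g

/-- A resolving subcategory of `mod R`, viewed as a set of bundled modules
closed under isomorphism, containing the finitely generated projective modules, and closed
under direct summands, extensions and syzygies. -/
structure IsResolving (𝒳 : Set (ModuleCat.{u} R)) : Prop where
  fg : ∀ M ∈ 𝒳, Module.Finite R M
  iso_closed : ∀ M N : ModuleCat.{u} R, Nonempty (M ≃ₗ[R] N) → M ∈ 𝒳 → N ∈ 𝒳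
  proj_mem : ∀ M : ModuleCat.{u} R, Module.Finite R M → Module.Projective R M → M ∈ 𝒳
  summand_closed : ∀ M N : ModuleCat.{u} R, ModuleCat.of R (↥M × ↥N) ∈ 𝒳 → M ∈ 𝒳
  ext_closed : ∀ (A B C : ModuleCat.{u} R) (f : A →ₗ[R] B) (g : B →ₗ[R] C),
    IsSES f g → A ∈ 𝒳 → C ∈ 𝒳 → B ∈ 𝒳
  syzygy_closed : ∀ (K P M : ModuleCat.{u} R) (f : K →ₗ[R] P) (g : P →ₗ[R] M),
    IsSES f g → Module.Finite R K → Module.Finite R P → Module.Projective R P →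
    M ∈ 𝒳 → K ∈ 𝒳

/-- The resolving closure: the smallest resolving subcategory containing `S`. -/
def resClosure (S : Set (ModuleCat.{u} R)) : Set (ModuleCat.{u} R) :=
  ⋂₀ {𝒳 | IsResolving R 𝒳 ∧ S ⊆ 𝒳}

/-- An extension-closed subcategory of `mod R`: closed under isomorphism,
direct summands and extensions. -/
def IsExtClosed (𝒳 : Set (ModuleCat.{u} R)) : Prop :=
  (∀ M N : ModuleCat.{u} R, Nonempty (M ≃ₗ[R] N) → M ∈ 𝒳 → N ∈ 𝒳) ∧
  (∀ M N : ModuleCat.{u} R, ModuleCat.of R (↥M × ↥N) ∈ 𝒳 → M ∈ 𝒳) ∧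
  (∀ (A B C : ModuleCat.{u} R) (f : A →ₗ[R] B) (g : B →ₗ[R] C),
    IsSES f g → A ∈ 𝒳 → C ∈ 𝒳 → B ∈ 𝒳)

/-- The extension closure of a set of modules. -/
def extClosure (S : Set (ModuleCat.{u} R)) : Set (ModuleCat.{u} R) :=
  ⋂₀ {𝒳 | IsExtClosed R 𝒳 ∧ S ⊆ 𝒳}

/-- `add R`: direct summands of finite free modules. -/
def addR : Set (ModuleCat.{u} R) :=
  {M | ∃ (n : ℕ) (N : ModuleCat.{u} R), Nonempty ((↥M × ↥N) ≃ₗ[R] (Fin n → R))}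

/-- `pdLE n M` : the projective dimension of `M` is at most `n`. -/
def pdLE : ℕ → ModuleCat.{u} R → Prop
  | 0, M => Module.Projective R M
  | n+1, M => ∃ (K P : ModuleCat.{u} R) (f : K →ₗ[R] P) (g : P →ₗ[R] M),
      Module.Finite R P ∧ Module.Projective R P ∧ IsSES f g ∧ pdLE n K

/-- The projective dimension, an element of `WithBot ℕ∞`; the zero module
has projective dimension `⊥ = -∞`. -/
noncomputable def pdim (M : ModuleCat.{u} R) : WithBot ℕ∞ :=
  sInf {x : WithBot ℕ∞ | (x = ⊥ ∧ Subsingleton M) ∨ ∃ n : ℕ, x = (n : ℕ∞) ∧ pdLE R n M}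

/-- The depth of `M` with respect to the ideal `I`: the supremum of lengths of weakly
`M`-regular sequences contained in `I`.  The zero module has depth `∞`. -/
noncomputable def depthE (I : Ideal R) (M : Type u) [AddCommGroup M] [Module R M] : ℕ∞ :=
  sSup {x : ℕ∞ | ∃ rs : List R, (∀ r ∈ rs, r ∈ I) ∧
    RingTheory.Sequence.IsWeaklyRegular M rs ∧ x = rs.length}

/-- The grade of an ideal: the length of a maximal `R`-regular sequence in `I`. -/
noncomputable def gradeE (I : Ideal R) : ℕ∞ := depthE R I R

/-- A grade consistent function on `Spec R`. -/
def GradeConsistent (f : PrimeSpectrum R → ℕ) : Prop :=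
  (∀ p : PrimeSpectrum R, (f p : ℕ∞) ≤ gradeE R p.asIdeal) ∧
  (∀ p q : PrimeSpectrum R, p.asIdeal ≤ q.asIdeal → f p ≤ f q)

/-- The localization of a module at a prime, as a module over the local ring `R_p`. -/
noncomputable abbrev localizeM (p : PrimeSpectrum R) (M : ModuleCat.{u} R) :
    ModuleCat.{u} (Localization.AtPrime p.asIdeal) :=
  ModuleCat.of (Localization.AtPrime p.asIdeal) (LocalizedModule p.asIdeal.primeCompl M)

/-- `pd_{R_p} M_p`. -/
noncomputable def localPdim (p : PrimeSpectrum R) (M : ModuleCat.{u} R) : WithBot ℕ∞ :=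
  pdim (Localization.AtPrime p.asIdeal) (localizeM R p M)

/-- `depth_{R_p} M_p`. -/
noncomputable def localDepth (p : PrimeSpectrum R) (M : ModuleCat.{u} R) : ℕ∞ :=
  depthE (Localization.AtPrime p.asIdeal)
    (IsLocalRing.maximalIdeal (Localization.AtPrime p.asIdeal))
    (LocalizedModule p.asIdeal.primeCompl M)

/-- The height of a prime ideal. -/
noncomputable def heightE (p : PrimeSpectrum R) : ℕ∞ := Order.height p

/-- `PD(R)` : finitely generated modules of finite projective dimension. -/
def PDcat : Set (ModuleCat.{u} R) :=
  {M | Module.Finite R M ∧ ∃ n : ℕ, pdLE R n M}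

/-- `MCM(R)` : maximal Cohen-Macaulay modules. -/
def MCMcat : Set (ModuleCat.{u} R) :=
  {M | Module.Finite R M ∧ ∀ p : PrimeSpectrum R, heightE R p ≤ localDepth R p M}

/-- The nonfree locus of a module. -/
def NF (M : ModuleCat.{u} R) : Set (PrimeSpectrum R) :=
  {p | ¬ Module.Free (Localization.AtPrime p.asIdeal) (LocalizedModule p.asIdeal.primeCompl M)}

/-- The infinite projective dimension locus of a module. -/
def IPD (M : ModuleCat.{u} R) : Set (PrimeSpectrum R) :=
  {p | localPdim R p M = (⊤ : WithBot ℕ∞)}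

/-- The infinite projective dimension locus of a collection of modules. -/
def IPDcat (𝒳 : Set (ModuleCat.{u} R)) : Set (PrimeSpectrum R) :=
  ⋃ M ∈ 𝒳, IPD R M

/-- The modules in `mod R` whose infinite projective dimension locus lies in `W`. -/
def IPDinv (W : Set (PrimeSpectrum R)) : Set (ModuleCat.{u} R) :=
  {M | Module.Finite R M ∧ IPD R M ⊆ W}

/-- A specialization closed subset of `Spec R`. -/
def SpecClosed (W : Set (PrimeSpectrum R)) : Prop :=
  ∀ p ∈ W, ∀ q : PrimeSpectrum R, p.asIdeal ≤ q.asIdeal → q ∈ W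

/-- Membership in `add 𝒳_p`: direct summands of localizations of finite direct sums
of members of `𝒳`. -/
def memAddLocal (𝒳 : Set (ModuleCat.{u} R)) (p : PrimeSpectrum R)
    (N : ModuleCat.{u} (Localization.AtPrime p.asIdeal)) : Prop :=
  ∃ (n : ℕ) (X : Fin n → ModuleCat.{u} R), (∀ i, X i ∈ 𝒳) ∧
    ∃ (N' : ModuleCat.{u} (Localization.AtPrime p.asIdeal)),
      Nonempty ((↥N × ↥N') ≃ₗ[Localization.AtPrime p.asIdeal]
        ((i : Fin n) → LocalizedModule p.asIdeal.primeCompl (X i)))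

/-- `K` is an `n`-th syzygy of `M` computed from a minimal free resolution over the
local ring `S`. -/
def IsMinSyz (S : Type u) [CommRing S] [IsLocalRing S] :
    ℕ → ModuleCat.{u} S → ModuleCat.{u} S → Prop
  | 0, M, K => Nonempty (K ≃ₗ[S] M)
  | n+1, M, K => ∃ (F : ModuleCat.{u} S) (g : F →ₗ[S] M) (K' : ModuleCat.{u} S)
      (i : K' →ₗ[S] F),
      Module.Finite S F ∧ Module.Free S F ∧ Function.Surjective g ∧
      (LinearMap.ker g ≤ (IsLocalRing.maximalIdeal S) • (⊤ : Submodule S F)) ∧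
      Function.Injective i ∧ LinearMap.range i = LinearMap.ker g ∧
      IsMinSyz S n K' K

/-- `K` is an `n`-th syzygy of `M` in some projective resolution (over any ring). -/
def IsSyz : ℕ → ModuleCat.{u} R → ModuleCat.{u} R → Prop
  | 0, M, K => Nonempty (K ≃ₗ[R] M)
  | n+1, M, K => ∃ (F : ModuleCat.{u} R) (g : F →ₗ[R] M) (K' : ModuleCat.{u} R)
      (i : K' →ₗ[R] F),
      Module.Finite R F ∧ Module.Projective R F ∧ Function.Surjective g ∧
      Function.Injective i ∧ LinearMap.range i = LinearMap.ker g ∧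
      IsSyz n K' K

/-- `T` is (isomorphic to) the Auslander transpose of `M`, computed from a minimal
free presentation over the local ring `S`. -/
def IsTranspose (S : Type u) [CommRing S] [IsLocalRing S] (M T : ModuleCat.{u} S) : Prop :=
  ∃ (F1 F0 : ModuleCat.{u} S) (d : F1 →ₗ[S] F0) (e : F0 →ₗ[S] M),
    Module.Finite S F0 ∧ Module.Free S F0 ∧ Module.Finite S F1 ∧ Module.Free S F1 ∧
    Function.Surjective e ∧ LinearMap.range d = LinearMap.ker e ∧
    LinearMap.ker e ≤ (IsLocalRing.maximalIdeal S) • (⊤ : Submodule S F0) ∧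
    LinearMap.ker d ≤ (IsLocalRing.maximalIdeal S) • (⊤ : Submodule S F1) ∧
    Nonempty (T ≃ₗ[S] ((Module.Dual S F1) ⧸ LinearMap.range d.dualMap))

/-- `T` is (isomorphic to) `Tr Ω^n M` over the local ring `S`. -/
def IsTrOmega (S : Type u) [CommRing S] [IsLocalRing S] (n : ℕ) (M T : ModuleCat.{u} S) :
    Prop :=
  ∃ K : ModuleCat.{u} S, IsMinSyz S n M K ∧ IsTranspose S K T

/-- Resolving subcategory `𝒳` is dominant on `W ⊆ Spec R`. -/
def DominantOn (𝒳 : Set (ModuleCat.{u} R)) (W : Set (PrimeSpectrum R)) : Prop :=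
  ∀ p ∈ W, ∃ (n : ℕ) (K : ModuleCat.{u} (Localization.AtPrime p.asIdeal)),
    IsMinSyz (Localization.AtPrime p.asIdeal) n
      (ModuleCat.of (Localization.AtPrime p.asIdeal)
        (IsLocalRing.ResidueField (Localization.AtPrime p.asIdeal))) K ∧
    memAddLocal R 𝒳 p K

/-- Dominant resolving subcategory. -/
def Dominant (𝒳 : Set (ModuleCat.{u} R)) : Prop := DominantOn R 𝒳 Set.univ

/-- A (noetherian) local ring is Cohen-Macaulay if its depth equals its Krull dimension. -/
def IsCMLocalRing (S : Type u) [CommRing S] [IsLocalRing S] : Prop :=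
  IsNoetherianRing S ∧
    ((depthE S (IsLocalRing.maximalIdeal S) S : WithBot ℕ∞) = ringKrullDim S)

/-- A regular local ring: a noetherian local ring whose maximal ideal is generated by
`dim S` elements. -/
def IsRegLocalRing (S : Type u) [CommRing S] [IsLocalRing S] : Prop :=
  IsNoetherianRing S ∧ ∃ s : Finset S,
    Ideal.span (s : Set S) = IsLocalRing.maximalIdeal S ∧
    ringKrullDim S = (s.card : WithBot ℕ∞)

/-- The singular locus of `R`. -/
def SingLocus : Set (PrimeSpectrum R) :=
  {p | ¬ IsRegLocalRing (Localization.AtPrime p.asIdeal)}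

/-- A hypersurface local ring: the completion is a quotient of a regular local ring by
one element. -/
def IsHypersurfaceLocalRing (S : Type u) [CommRing S] [IsLocalRing S] : Prop :=
  ∃ (T : Type u) (_ : CommRing T) (_ : IsLocalRing T) (f : T),
    IsRegLocalRing T ∧
    Nonempty ((AdicCompletion (IsLocalRing.maximalIdeal S) S) ≃+* (T ⧸ Ideal.span {f}))

/-- A complete intersection local ring: the completion is a quotient of a regular local
ring by a regular sequence. -/
def IsCompleteIntersectionLocalRing (S : Type u) [CommRing S] [IsLocalRing S] : Prop :=
  ∃ (T : Type u) (_ : CommRing T) (_ : IsLocalRing T) (rs : List T),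
    IsRegLocalRing T ∧ RingTheory.Sequence.IsRegular T rs ∧
    Nonempty ((AdicCompletion (IsLocalRing.maximalIdeal S) S) ≃+*
      (T ⧸ Ideal.ofList rs))

/-- The subquotient `A / (A ⊓ B)` of two submodules, used for homology. -/
def subquot {S M : Type u} [CommRing S] [AddCommGroup M] [Module S M]
    (A B : Submodule S M) : Type u :=
  A ⧸ (B.comap A.subtype)

noncomputable instance {S M : Type u} [CommRing S] [AddCommGroup M] [Module S M]
    (A B : Submodule S M) : AddCommGroup (subquot A B) :=
  inferInstanceAs (AddCommGroup (A ⧸ (B.comap A.subtype)))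

noncomputable instance {S M : Type u} [CommRing S] [AddCommGroup M] [Module S M]
    (A B : Submodule S M) : Module S (subquot A B) :=
  inferInstanceAs (Module S (A ⧸ (B.comap A.subtype)))

/-- `E` is (isomorphic to) `Ext^{j+1}_S(M, S)`, computed from a finite free resolution. -/
def IsExtPos (S : Type u) [CommRing S] (j : ℕ) (M E : ModuleCat.{u} S) : Prop :=
  ∃ (F : ℕ → ModuleCat.{u} S) (d : ∀ i : ℕ, (F (i+1) : Type u) →ₗ[S] F i)
    (e : (F 0 : Type u) →ₗ[S] M),
    (∀ i, Module.Finite S (F i)) ∧ (∀ i, Module.Free S (F i)) ∧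
    Function.Surjective e ∧ LinearMap.range (d 0) = LinearMap.ker e ∧
    (∀ i, LinearMap.range (d (i+1)) = LinearMap.ker (d i)) ∧
    Nonempty (E ≃ₗ[S]
      subquot (LinearMap.ker ((d (j+1)).dualMap)) (LinearMap.range ((d j).dualMap)))

/-- `T` is (isomorphic to) `Tor_n^S(M, N)`, computed from a projective resolution of `M`. -/
def IsTor (S : Type u) [CommRing S] (n : ℕ) (M N T : ModuleCat.{u} S) : Prop :=
  ∃ (F : ℕ → ModuleCat.{u} S) (d : ∀ i : ℕ, (F (i+1) : Type u) →ₗ[S] F i)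
    (e : (F 0 : Type u) →ₗ[S] M),
    (∀ i, Module.Projective S (F i)) ∧
    Function.Surjective e ∧ LinearMap.range (d 0) = LinearMap.ker e ∧
    (∀ i, LinearMap.range (d (i+1)) = LinearMap.ker (d i)) ∧
    (match n with
      | 0 => Nonempty (T ≃ₗ[S] TensorProduct S M N)
      | (j+1) => Nonempty (T ≃ₗ[S]
          subquot (LinearMap.ker (LinearMap.rTensor (↥N) (d j)))
            (LinearMap.range (LinearMap.rTensor (↥N) (d (j+1))))))

/-- `idLE n M` : the injective dimension of `M` is at most `n`. -/
def idLE (S : Type u) [CommRing S] : ℕ → ModuleCat.{u} S → Prop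
  | 0, M => Module.Injective S M
  | n+1, M => ∃ (I C : ModuleCat.{u} S) (f : M →ₗ[S] I) (g : I →ₗ[S] C),
      IsSES f g ∧ Module.Injective S I ∧ idLE S n C

/-- `PD_0^n(R)` over a local ring: modules of projective dimension at most `n` that are
free on the punctured spectrum. -/
def PD0n [IsLocalRing R] (n : ℕ) : Set (ModuleCat.{u} R) :=
  {M | Module.Finite R M ∧ pdLE R n M ∧
    ∀ p : PrimeSpectrum R, p.asIdeal ≠ IsLocalRing.maximalIdeal R →
      Module.Free (Localization.AtPrime p.asIdeal) (LocalizedModule p.asIdeal.primeCompl M)}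

/-- `PD_0(R)` over a local ring: modules of finite projective dimension that are
free on the punctured spectrum. -/
def PD0 [IsLocalRing R] : Set (ModuleCat.{u} R) :=
  {M | Module.Finite R M ∧ (∃ n : ℕ, pdLE R n M) ∧
    ∀ p : PrimeSpectrum R, p.asIdeal ≠ IsLocalRing.maximalIdeal R →
      Module.Free (Localization.AtPrime p.asIdeal) (LocalizedModule p.asIdeal.primeCompl M)}

/-- The residue field of a local ring, as a bundled module. -/
noncomputable abbrev residueMod (S : Type u) [CommRing S] [IsLocalRing S] : ModuleCat.{u} S :=
  ModuleCat.of S (IsLocalRing.ResidueField S)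


/-- The map `ψ` defined by depth conditions:
`ψ(f) = { M ∈ mod R | depth M_p ≥ ht p - f(p) for all p }`. -/
def psiDepth (f : PrimeSpectrum R → ℕ) : Set (ModuleCat.{u} R) :=
  {M | Module.Finite R M ∧
    ∀ p : PrimeSpectrum R, heightE R p - (f p : ℕ∞) ≤ localDepth R p M}

/-!
Let `R` be Cohen-Macaulay and `𝒳` a dominant resolving subcategory; let `d p` be the least depth of
a module in `𝒳_p`. Cutting a module of depth `d p` by a regular sequence leaves a module with `κ(p)`
as a submodule; since dominance puts some syzygy of `κ(p)` into `𝒳_p`, this forces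
`Ω^{d p} κ(p) ∈ 𝒳_p`. Now let `M` satisfy `depth M_q ≥ d q` for all `q`. By induction on the height
of `p`, every proper localization of `M_p` lies in the localized class, so the ideal of those `x`
whose multiplication on `M_p` factors through `𝒳_p` contains a power of the maximal ideal, hence a
regular sequence of length `d p`. For such `x` a module lies in `𝒳_p` as soon as the kernel of
`M × P → M, (m, y) ↦ x m + π y` does, where `π : P → M` is a surjection from a projective; running
through the regular sequence reduces `M_p ∈ 𝒳_p` to `d p`-th syzygies of modules of finite length,
which are extensions of copies of `Ω^{d p} κ(p)`. The factorization ideal formed over `R` then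
descends `M ∈ 𝒳` from all the `M_p ∈ 𝒳_p`. Hence `𝒳 = ψ(ht - d)`.

Conversely, for grade consistent `f` the class `ψ(f)` is dominant because `ht q - depth M_q` is
bounded in `q`, by dévissage to the quotients `R ⧸ P` and Cohen-Macaulayness. The bound
`depth M_p ≥ ht p - f p` is attained by some `M ∈ ψ(f)`: starting from `T = R`, pass `f p` times to
the cokernel of `T → T^m, t ↦ (x₁ t, …, x_m t)`, where `x₁, …, x_m` generate `p`; each step lowers
the depth by one at `p`, by at most one at the primes above `p`, and not at all elsewhere.
-/

section ShortExact

variable {S : Type u} [CommRing S]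
variable {A B C A' B' F P X : Type u}
  [AddCommGroup A] [Module S A] [AddCommGroup B] [Module S B] [AddCommGroup C] [Module S C]
  [AddCommGroup A'] [Module S A'] [AddCommGroup B'] [Module S B']
  [AddCommGroup F] [Module S F] [AddCommGroup P] [Module S P] [AddCommGroup X] [Module S X]

lemma isSES_iff_exact {f : A →ₗ[S] B} {g : B →ₗ[S] C} :
    IsSES f g ↔ Function.Injective f ∧ Function.Surjective g ∧ Function.Exact f g := by
  rw [IsSES, LinearMap.exact_iff, eq_comm (a := LinearMap.range f)]

lemma IsSES.exact {f : A →ₗ[S] B} {g : B →ₗ[S] C} (h : IsSES f g) : Function.Exact f g :=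
  (isSES_iff_exact.1 h).2.2

lemma IsSES.apply_apply {f : A →ₗ[S] B} {g : B →ₗ[S] C} (h : IsSES f g) (a : A) :
    g (f a) = 0 :=
  h.exact.apply_apply_eq_zero a

lemma IsSES.exists_apply_eq {f : A →ₗ[S] B} {g : B →ₗ[S] C} (h : IsSES f g) {b : B}
    (hb : g b = 0) : ∃ a, f a = b :=
  (h.exact b).1 hb

lemma IsSES.of_forall {f : A →ₗ[S] B} {g : B →ₗ[S] C} (hf : ∀ a, f a = 0 → a = 0)
    (hg : ∀ c, ∃ b, g b = c) (hgf : ∀ a, g (f a) = 0) (hker : ∀ b, g b = 0 → ∃ a, f a = b) :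
    IsSES f g :=
  isSES_iff_exact.2 ⟨(injective_iff_map_eq_zero f).2 hf, hg,
    fun b => ⟨hker b, fun ⟨a, ha⟩ => ha ▸ hgf a⟩⟩

lemma isSES_mkQ_range {f : A →ₗ[S] B} (hf : Function.Injective f) :
    IsSES f (LinearMap.range f).mkQ :=
  ⟨hf, Submodule.mkQ_surjective _, (Submodule.ker_mkQ _).symm⟩

lemma isSES_ker_subtype {g : B →ₗ[S] C} (hg : Function.Surjective g) :
    IsSES (LinearMap.ker g).subtype g :=
  ⟨Subtype.val_injective, hg, by simp⟩

open scoped Pointwise in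
lemma isSES_smul_mkQ {r : S} (h : IsSMulRegular X r) :
    IsSES (r • (LinearMap.id : X →ₗ[S] X)) (Submodule.mkQ (r • (⊤ : Submodule S X))) := by
  refine ⟨h, Submodule.mkQ_surjective _, ?_⟩
  rw [Submodule.ker_mkQ]
  ext y
  exact ⟨fun ⟨z, hz⟩ => ⟨z, trivial, hz⟩, fun ⟨z, _, hz⟩ => ⟨z, hz⟩⟩

lemma isSES_inl_snd : IsSES (LinearMap.inl S A B) (LinearMap.snd S A B) :=
  ⟨LinearMap.inl_injective, LinearMap.snd_surjective, LinearMap.range_inl S A B⟩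

/-- The identification of the left term of a short exact sequence with the kernel of the
second map. -/
noncomputable def IsSES.kerEquiv {f : A →ₗ[S] B} {g : B →ₗ[S] C} (h : IsSES f g) :
    A ≃ₗ[S] LinearMap.ker g :=
  (LinearEquiv.ofInjective f h.1).trans (LinearEquiv.ofEq _ _ h.2.2)

/-- The fiber product `B ×_C B'`, as a submodule of `B × B'`. -/
def fiberProduct (g : B →ₗ[S] C) (g' : B' →ₗ[S] C) : Submodule S (B × B') :=
  LinearMap.eqLocus (g ∘ₗ LinearMap.fst S B B') (g' ∘ₗ LinearMap.snd S B B')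

namespace fiberProduct

lemma mem_iff {g : B →ₗ[S] C} {g' : B' →ₗ[S] C} {x : B × B'} :
    x ∈ fiberProduct g g' ↔ g x.1 = g' x.2 :=
  Iff.rfl

/-- The first projection of a fiber product. -/
def fst (g : B →ₗ[S] C) (g' : B' →ₗ[S] C) : fiberProduct g g' →ₗ[S] B :=
  LinearMap.fst S B B' ∘ₗ (fiberProduct g g').subtype

/-- The second projection of a fiber product. -/
def snd (g : B →ₗ[S] C) (g' : B' →ₗ[S] C) : fiberProduct g g' →ₗ[S] B' :=
  LinearMap.snd S B B' ∘ₗ (fiberProduct g g').subtype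

lemma exists_isSES_fst (g : B →ₗ[S] C) {f' : A' →ₗ[S] B'} {g' : B' →ₗ[S] C}
    (h : IsSES f' g') : ∃ i : A' →ₗ[S] fiberProduct g g', IsSES i (fst g g') := by
  refine ⟨LinearMap.codRestrict _ (LinearMap.inr S B B' ∘ₗ f') fun a => ?_,
    IsSES.of_forall (fun a ha => ?_) (fun b => ?_) (fun _ => rfl) ?_⟩
  · simp [mem_iff, h.apply_apply]
  · exact (injective_iff_map_eq_zero f').1 h.1 a (congrArg (fun z => z.1.2) ha)
  · obtain ⟨b', hb'⟩ := h.2.1 (g b)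
    exact ⟨⟨(b, b'), hb'.symm⟩, rfl⟩
  · rintro ⟨⟨b, b'⟩, hb⟩ (rfl : b = 0)
    obtain ⟨a, ha⟩ := h.exists_apply_eq (b := b') (by simpa [mem_iff] using hb.symm)
    exact ⟨a, Subtype.ext (Prod.ext rfl ha)⟩

lemma exists_isSES_snd {f : A →ₗ[S] B} {g : B →ₗ[S] C} (g' : B' →ₗ[S] C) (h : IsSES f g) :
    ∃ i : A →ₗ[S] fiberProduct g g', (∀ a, (i a).1 = (f a, 0)) ∧ IsSES i (snd g g') := by
  refine ⟨LinearMap.codRestrict _ (LinearMap.inl S B B' ∘ₗ f) fun a => ?_, fun _ => rfl,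
    IsSES.of_forall (fun a ha => ?_) (fun b' => ?_) (fun _ => rfl) ?_⟩
  · simp [mem_iff, h.apply_apply]
  · exact (injective_iff_map_eq_zero f).1 h.1 a (congrArg (fun z => z.1.1) ha)
  · obtain ⟨b, hb⟩ := h.2.1 (g' b')
    exact ⟨⟨(b, b'), hb⟩, rfl⟩
  · rintro ⟨⟨b, b'⟩, hb⟩ (rfl : b' = 0)
    obtain ⟨a, ha⟩ := h.exists_apply_eq (b := b) (by simpa [mem_iff] using hb)
    exact ⟨a, Subtype.ext (Prod.ext ha rfl)⟩

end fiberProduct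

lemma IsSES.exists_pushout {f : A →ₗ[S] B} {g : B →ₗ[S] C} (h : IsSES f g) (b : A →ₗ[S] X) :
    ∃ (Z : ModuleCat.{u} S) (i : X →ₗ[S] Z) (p : Z →ₗ[S] C) (j : B →ₗ[S] Z),
      IsSES i p ∧ p ∘ₗ j = g ∧ i ∘ₗ b = j ∘ₗ f ∧
      ∀ (Y : Type u) [AddCommGroup Y] [Module S Y] (φ : X →ₗ[S] Y) (ψ : B →ₗ[S] Y),
        φ ∘ₗ b = ψ ∘ₗ f → ∃ θ : Z →ₗ[S] Y, θ ∘ₗ i = φ ∧ θ ∘ₗ j = ψ := by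
  let N : Submodule S (X × B) := LinearMap.range (b.prod (-f))
  have hN : N ≤ LinearMap.ker (g ∘ₗ LinearMap.snd S X B) := by
    rintro _ ⟨a, rfl⟩
    simp [h.apply_apply]
  refine ⟨ModuleCat.of S ((X × B) ⧸ N), N.mkQ ∘ₗ LinearMap.inl S X B, N.liftQ _ hN,
    N.mkQ ∘ₗ LinearMap.inr S X B, IsSES.of_forall (fun x hx => ?_) (fun c => ?_) (fun x => ?_)
      (fun z hz => ?_), ?_, ?_, fun Y _ _ φ ψ hφψ => ⟨N.liftQ (φ.coprod ψ) ?_, ?_, ?_⟩⟩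
  · obtain ⟨a, ha⟩ := (Submodule.Quotient.mk_eq_zero N).1 hx
    have ha0 : a = 0 := by
      simpa using h.1 (a₁ := -a) (a₂ := 0) (by simpa using congrArg Prod.snd ha)
    simpa [ha0] using (congrArg Prod.fst ha).symm
  · obtain ⟨y, rfl⟩ := h.2.1 c
    exact ⟨N.mkQ (0, y), by simp⟩
  · simp
  · obtain ⟨⟨x, y⟩, rfl⟩ := N.mkQ_surjective z
    obtain ⟨a, rfl⟩ := h.exists_apply_eq (b := y) (by simpa using hz)
    refine ⟨x + b a, (Submodule.Quotient.eq N).2 ⟨a, by simp⟩⟩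
  · ext y; simp
  · ext a
    exact (Submodule.Quotient.eq N).2 ⟨a, by simp⟩
  · rintro _ ⟨a, rfl⟩
    simpa [← sub_eq_add_neg, sub_eq_zero] using LinearMap.congr_fun hφψ a
  · ext x; simp
  · ext y; simp

lemma IsSES.surjective_coprod {f : A →ₗ[S] B} {g : B →ₗ[S] C} (h : IsSES f g) {π : P →ₗ[S] A}
    (hπ : Function.Surjective π) {ρ : F →ₗ[S] B} (hρ : Function.Surjective (g ∘ₗ ρ)) :
    Function.Surjective ((f ∘ₗ π).coprod ρ) := by
  intro b
  obtain ⟨x, hx⟩ := hρ (g b)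
  obtain ⟨a, ha⟩ := h.exists_apply_eq (b := b - ρ x) (by rw [map_sub, ← hx]; simp)
  obtain ⟨p, rfl⟩ := hπ a
  exact ⟨(p, x), by simp [ha]⟩

/-- The kernel sequence of the horseshoe lemma. -/
lemma IsSES.exists_isSES_ker {f : A →ₗ[S] B} {g : B →ₗ[S] C} (h : IsSES f g) {π : P →ₗ[S] A}
    (hπ : Function.Surjective π) (ρ : F →ₗ[S] B) :
    ∃ (i : LinearMap.ker π →ₗ[S] LinearMap.ker ((f ∘ₗ π).coprod ρ))
      (j : LinearMap.ker ((f ∘ₗ π).coprod ρ) →ₗ[S] LinearMap.ker (g ∘ₗ ρ)), IsSES i j := by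
  refine ⟨(LinearMap.inl S P F).restrict fun p hp => ?_,
    (LinearMap.snd S P F).restrict fun z hz => ?_,
    IsSES.of_forall (fun p hp => ?_) ?_ (fun _ => rfl) ?_⟩
  · simp [LinearMap.mem_ker.1 hp]
  · simpa [h.apply_apply] using congrArg g (LinearMap.mem_ker.1 hz)
  · exact Subtype.ext (congrArg (fun z => z.1.1) hp)
  · rintro ⟨x, hx⟩
    obtain ⟨a, ha⟩ := h.exists_apply_eq hx
    obtain ⟨p, rfl⟩ := hπ a
    exact ⟨⟨(-p, x), by simp [ha]⟩, rfl⟩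
  · rintro ⟨⟨p, x⟩, hz⟩ hx
    obtain rfl : x = 0 := congrArg Subtype.val hx
    have hp : f (π p) = 0 := by simpa using hz
    exact ⟨⟨p, (injective_iff_map_eq_zero f).1 h.1 _ hp⟩, rfl⟩

lemma exists_finite_projective_surjective (M : Type u) [AddCommGroup M] [Module S M]
    [Module.Finite S M] :
    ∃ (P : ModuleCat.{u} S) (π : P →ₗ[S] M), Module.Finite S P ∧ Module.Projective S P ∧
      Function.Surjective π := by
  obtain ⟨n, π, hπ⟩ := Module.Finite.exists_fin' S M
  exact ⟨ModuleCat.of S (Fin n → S), π, inferInstanceAs (Module.Finite S (Fin n → S)),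
    inferInstanceAs (Module.Projective S (Fin n → S)), hπ⟩

end ShortExact

section Resolving

variable {S : Type u} [CommRing S] {𝒳 : Set (ModuleCat.{u} S)}
variable {A B C K M N P X : Type u}
  [AddCommGroup A] [Module S A] [AddCommGroup B] [Module S B] [AddCommGroup C] [Module S C]
  [AddCommGroup K] [Module S K] [AddCommGroup M] [Module S M] [AddCommGroup N] [Module S N]
  [AddCommGroup P] [Module S P] [AddCommGroup X] [Module S X]

/-- Membership of an unbundled module in a class of bundled modules. -/
def Mem (𝒳 : Set (ModuleCat.{u} S)) (M : Type u) [AddCommGroup M] [Module S M] : Prop :=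
  ModuleCat.of S M ∈ 𝒳

namespace IsResolving

lemma mem_of_linearEquiv (h𝒳 : IsResolving S 𝒳) (e : M ≃ₗ[S] N) (hM : Mem 𝒳 M) : Mem 𝒳 N :=
  h𝒳.iso_closed _ (ModuleCat.of S N) ⟨e⟩ hM

lemma finite_of_mem (h𝒳 : IsResolving S 𝒳) (hM : Mem 𝒳 M) : Module.Finite S M :=
  h𝒳.fg _ hM

lemma mem_of_projective (h𝒳 : IsResolving S 𝒳) (P : Type u) [AddCommGroup P] [Module S P]
    [hfin : Module.Finite S P] [hproj : Module.Projective S P] : Mem 𝒳 P :=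
  h𝒳.proj_mem (ModuleCat.of S P) hfin hproj

lemma mem_of_extension (h𝒳 : IsResolving S 𝒳) {f : A →ₗ[S] B} {g : B →ₗ[S] C}
    (h : IsSES f g) (hA : Mem 𝒳 A) (hC : Mem 𝒳 C) : Mem 𝒳 B :=
  h𝒳.ext_closed (ModuleCat.of S A) (ModuleCat.of S B) (ModuleCat.of S C) f g h hA hC

lemma mem_prod (h𝒳 : IsResolving S 𝒳) (hA : Mem 𝒳 A) (hB : Mem 𝒳 B) : Mem 𝒳 (A × B) :=
  h𝒳.mem_of_extension isSES_inl_snd hA hB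

lemma mem_of_retract (h𝒳 : IsResolving S 𝒳) (hX : Mem 𝒳 X) (i : M →ₗ[S] X) (r : X →ₗ[S] M)
    (h : ∀ m, r (i m) = m) : Mem 𝒳 M := by
  have hr : Function.Surjective r := fun m => ⟨i m, h m⟩
  have e := ((isSES_ker_subtype hr).exact.splitSurjectiveEquiv Subtype.val_injective
    ⟨i, LinearMap.ext h⟩).1
  exact h𝒳.summand_closed (ModuleCat.of S M) (ModuleCat.of S (LinearMap.ker r))
    (h𝒳.mem_of_linearEquiv (e.trans (LinearEquiv.prodComm S _ _)) hX)

variable [IsNoetherianRing S]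

lemma mem_of_syzygy (h𝒳 : IsResolving S 𝒳) [Module.Finite S P] [Module.Projective S P]
    {f : K →ₗ[S] P} {g : P →ₗ[S] M} (h : IsSES f g) (hM : Mem 𝒳 M) : Mem 𝒳 K :=
  h𝒳.syzygy_closed (ModuleCat.of S K) (ModuleCat.of S P) (ModuleCat.of S M) f g h
    (Module.Finite.of_injective f h.1) ‹_› ‹_› hM

/-- The fiber product of `g` with a surjection `π` from a projective is an extension of `B` by the
syzygy `ker π`, and it retracts onto `ker g` because `π` lifts to `B`. -/
lemma mem_of_kernel (h𝒳 : IsResolving S 𝒳) {f : A →ₗ[S] B} {g : B →ₗ[S] C} (h : IsSES f g)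
    (hB : Mem 𝒳 B) (hC : Mem 𝒳 C) : Mem 𝒳 A := by
  have := h𝒳.finite_of_mem hC
  obtain ⟨P, π, _, _, hπ⟩ := exists_finite_projective_surjective (S := S) C
  obtain ⟨i, hi⟩ := fiberProduct.exists_isSES_fst g (isSES_ker_subtype hπ)
  have hQ : Mem 𝒳 (fiberProduct g π) :=
    h𝒳.mem_of_extension hi (h𝒳.mem_of_syzygy (isSES_ker_subtype hπ) hC) hB
  obtain ⟨σ, hσ⟩ := Module.projective_lifting_property g π h.2.1
  refine h𝒳.mem_of_linearEquiv h.kerEquiv.symm (h𝒳.mem_of_retract hQ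
    ((LinearMap.inl S B P).restrict fun b hb => ?_)
    (LinearMap.codRestrict _ (fiberProduct.fst g π - σ ∘ₗ fiberProduct.snd g π) fun z => ?_)
    fun b => ?_)
  · simpa [fiberProduct.mem_iff] using hb
  · have hlift : g (σ z.1.2) = π z.1.2 := LinearMap.congr_fun hσ z.1.2
    simp [fiberProduct.fst, fiberProduct.snd, hlift, fiberProduct.mem_iff.1 z.2]
  · exact Subtype.ext (by simp [fiberProduct.fst, fiberProduct.snd])

end IsResolving

/-- `Ω⁻¹ 𝒳`: the finitely generated modules with a first syzygy in `𝒳`. -/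
def syzPreimage (𝒳 : Set (ModuleCat.{u} S)) : Set (ModuleCat.{u} S) :=
  {M | ∃ (P : ModuleCat.{u} S) (π : P →ₗ[S] M), Module.Finite S P ∧ Module.Projective S P ∧
    Function.Surjective π ∧ Mem 𝒳 (LinearMap.ker π)}

lemma finite_of_mem_syzPreimage (hM : Mem (syzPreimage 𝒳) M) : Module.Finite S M := by
  obtain ⟨P, π, _, _, hπ, -⟩ := hM
  exact Module.Finite.of_surjective π hπ

lemma syzPreimage_mono : Monotone (syzPreimage (S := S)) := by
  rintro 𝒳 𝒴 h M ⟨P, π, hfin, hproj, hπ, hK⟩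
  exact ⟨P, π, hfin, hproj, hπ, h hK⟩

namespace IsResolving

lemma mem_syzPreimage_of_isSES (h𝒳 : IsResolving S 𝒳) [hfin : Module.Finite S P]
    [hproj : Module.Projective S P] {f : K →ₗ[S] P} {g : P →ₗ[S] M} (h : IsSES f g)
    (hK : Mem 𝒳 K) : Mem (syzPreimage 𝒳) M :=
  ⟨ModuleCat.of S P, g, hfin, hproj, h.2.1, h𝒳.mem_of_linearEquiv h.kerEquiv hK⟩

variable [IsNoetherianRing S]

lemma mem_of_mem_syzPreimage (h𝒳 : IsResolving S 𝒳) [Module.Finite S P] [Module.Projective S P]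
    {f : K →ₗ[S] P} {g : P →ₗ[S] M} (h : IsSES f g) (hM : Mem (syzPreimage 𝒳) M) : Mem 𝒳 K := by
  obtain ⟨P₀, π, _, _, hπ, hK⟩ := hM
  obtain ⟨i, hi⟩ := fiberProduct.exists_isSES_fst g (isSES_ker_subtype hπ)
  obtain ⟨j, -, hj⟩ := fiberProduct.exists_isSES_snd π h
  have hQ : Mem 𝒳 (fiberProduct g π) := h𝒳.mem_of_extension hi hK (h𝒳.mem_of_projective P)
  exact h𝒳.mem_of_kernel hj hQ (h𝒳.mem_of_projective P₀)

lemma subset_syzPreimage (h𝒳 : IsResolving S 𝒳) : 𝒳 ⊆ syzPreimage 𝒳 := by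
  intro M hM
  have := h𝒳.fg M hM
  obtain ⟨P, π, _, _, hπ⟩ := exists_finite_projective_surjective (S := S) M
  exact h𝒳.mem_syzPreimage_of_isSES (isSES_ker_subtype hπ)
    (h𝒳.mem_of_syzygy (M := M) (isSES_ker_subtype hπ) hM)

lemma mem_syzPreimage_of_cokernel (h𝒳 : IsResolving S 𝒳) {f : A →ₗ[S] B} {g : B →ₗ[S] C}
    (h : IsSES f g) (hA : Mem 𝒳 A) (hB : Mem 𝒳 B) : Mem (syzPreimage 𝒳) C := by
  have := h𝒳.finite_of_mem hB
  have : Module.Finite S C := Module.Finite.of_surjective g h.2.1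
  obtain ⟨P, π, _, _, hπ⟩ := exists_finite_projective_surjective (S := S) C
  obtain ⟨i, -, hi⟩ := fiberProduct.exists_isSES_snd π h
  obtain ⟨j, hj⟩ := fiberProduct.exists_isSES_fst g (isSES_ker_subtype hπ)
  have hQ : Mem 𝒳 (fiberProduct g π) := h𝒳.mem_of_extension hi hA (h𝒳.mem_of_projective P)
  exact h𝒳.mem_syzPreimage_of_isSES (isSES_ker_subtype hπ) (h𝒳.mem_of_kernel hj hQ hB)

protected lemma syzPreimage (h𝒳 : IsResolving S 𝒳) : IsResolving S (syzPreimage 𝒳) where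
  fg M h := finite_of_mem_syzPreimage h
  iso_closed := by
    rintro M N ⟨e⟩ ⟨P, π, hfin, hproj, hπ, hK⟩
    refine ⟨P, e.toLinearMap ∘ₗ π, hfin, hproj, e.surjective.comp hπ, ?_⟩
    rwa [LinearEquiv.ker_comp]
  proj_mem M _ _ := h𝒳.subset_syzPreimage (h𝒳.mem_of_projective M)
  summand_closed M N h := by
    have := finite_of_mem_syzPreimage (M := M × N) h
    have := Module.Finite.of_surjective (LinearMap.fst S M N) LinearMap.fst_surjective
    have := Module.Finite.of_surjective (LinearMap.snd S M N) LinearMap.snd_surjective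
    obtain ⟨P, π, _, _, hπ⟩ := exists_finite_projective_surjective (S := S) M
    obtain ⟨Q, ρ, _, _, hρ⟩ := exists_finite_projective_surjective (S := S) N
    have hK : Mem 𝒳 (LinearMap.ker (π.prodMap ρ)) := h𝒳.mem_of_mem_syzPreimage (M := M × N)
      (isSES_ker_subtype (Function.Surjective.prodMap hπ hρ)) h
    exact h𝒳.mem_syzPreimage_of_isSES (isSES_ker_subtype hπ) (h𝒳.mem_of_retract hK
      ((LinearMap.inl S P Q).restrict fun p hp => by simpa using hp)
      ((LinearMap.fst S P Q).restrict fun z hz => congrArg Prod.fst hz) fun _ => rfl)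
  ext_closed := by
    rintro A B C f g h ⟨P, π, _, _, hπ, hK⟩ ⟨Q, ρ, _, _, hρ, hL⟩
    obtain ⟨σ, rfl⟩ := Module.projective_lifting_property g ρ h.2.1
    obtain ⟨i, j, hij⟩ := h.exists_isSES_ker hπ σ
    exact h𝒳.mem_syzPreimage_of_isSES (M := B) (isSES_ker_subtype (h.surjective_coprod hπ hρ))
      (h𝒳.mem_of_extension hij hK hL)
  syzygy_closed K P M f g h _ _ _ hM :=
    h𝒳.subset_syzPreimage (h𝒳.mem_of_mem_syzPreimage (M := M) (K := K) h hM)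

lemma iterate_syzPreimage (h𝒳 : IsResolving S 𝒳) (n : ℕ) :
    IsResolving S (syzPreimage^[n] 𝒳) := by
  induction n with
  | zero => exact h𝒳
  | succ n ih => rw [Function.iterate_succ_apply']; exact ih.syzPreimage

lemma monotone_iterate_syzPreimage (h𝒳 : IsResolving S 𝒳) :
    Monotone fun n => syzPreimage^[n] 𝒳 :=
  syzPreimage_mono.monotone_iterate_of_le_map h𝒳.subset_syzPreimage

end IsResolving

end Resolving

section SMulSyzygy

variable {S : Type u} [CommRing S] {𝒳 𝒴 : Set (ModuleCat.{u} S)}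
variable {A B C F F' K M M' P Q X : Type u}
  [AddCommGroup A] [Module S A] [AddCommGroup B] [Module S B] [AddCommGroup C] [Module S C]
  [AddCommGroup F] [Module S F] [AddCommGroup F'] [Module S F']
  [AddCommGroup K] [Module S K] [AddCommGroup M] [Module S M] [AddCommGroup M'] [Module S M']
  [AddCommGroup P] [Module S P] [AddCommGroup Q] [Module S Q] [AddCommGroup X] [Module S X]

/-- The kernel of `(m, p) ↦ x m + π p` on `M × P`. For a surjection `π` from a projective it is
a first syzygy of `M`, up to projectives, modified by the multiplication by `x` on `M`. -/
def smulSyzygy (x : S) (π : P →ₗ[S] M) : Submodule S (M × P) :=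
  LinearMap.ker ((x • LinearMap.id).coprod π)

lemma mem_smulSyzygy {x : S} {π : P →ₗ[S] M} {z : M × P} :
    z ∈ smulSyzygy x π ↔ x • z.1 + π z.2 = 0 := by
  simp [smulSyzygy]

lemma surjective_smul_coprod (x : S) {π : P →ₗ[S] M} (hπ : Function.Surjective π) :
    Function.Surjective ((x • LinearMap.id : M →ₗ[S] M).coprod π) :=
  hπ.forall.2 fun p => ⟨(0, p), by simp⟩

/-- The functoriality of `smulSyzygy` in `π`. -/
def smulSyzygyMap (x : S) {π : P →ₗ[S] M} {ρ : Q →ₗ[S] M'} (f : M →ₗ[S] M') (φ : P →ₗ[S] Q)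
    (h : ∀ p, ρ (φ p) = f (π p)) : smulSyzygy x π →ₗ[S] smulSyzygy x ρ :=
  (f.prodMap φ).restrict fun z hz => by
    simpa [mem_smulSyzygy, h] using congrArg f (mem_smulSyzygy.1 hz)

@[simp]
lemma coe_smulSyzygyMap (x : S) {π : P →ₗ[S] M} {ρ : Q →ₗ[S] M'} (f : M →ₗ[S] M')
    (φ : P →ₗ[S] Q) (h : ∀ p, ρ (φ p) = f (π p)) (z : smulSyzygy x π) :
    (smulSyzygyMap x f φ h z : M' × Q) = (f z.1.1, φ z.1.2) :=
  rfl

lemma exists_isSES_smulSyzygy_coprod (x : S) {π : P →ₗ[S] M} (hπ : Function.Surjective π)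
    (ρ : Q →ₗ[S] M) :
    ∃ (i : smulSyzygy x π →ₗ[S] smulSyzygy x (π.coprod ρ))
      (j : smulSyzygy x (π.coprod ρ) →ₗ[S] Q), IsSES i j := by
  refine ⟨smulSyzygyMap x LinearMap.id (LinearMap.inl S P Q) (by simp),
    LinearMap.snd S P Q ∘ₗ LinearMap.snd S M (P × Q) ∘ₗ (smulSyzygy x _).subtype,
    IsSES.of_forall (fun z hz => ?_) (fun q => ?_) (fun _ => rfl) ?_⟩
  · exact Subtype.ext (Prod.ext (congrArg (fun w => w.1.1) hz) (congrArg (fun w => w.1.2.1) hz))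
  · obtain ⟨p, hp⟩ := hπ (-ρ q)
    exact ⟨⟨(0, p, q), by simp [mem_smulSyzygy, hp]⟩, rfl⟩
  · rintro ⟨⟨m, p, q⟩, hz⟩ (rfl : q = 0)
    exact ⟨⟨(m, p), by simpa [mem_smulSyzygy] using hz⟩, rfl⟩

lemma IsSES.exists_isSES_smulSyzygy (x : S) {f : A →ₗ[S] B} {g : B →ₗ[S] C} (h : IsSES f g)
    {π : P →ₗ[S] A} (hπ : Function.Surjective π) (ρ : F →ₗ[S] B) :
    ∃ (i : smulSyzygy x π →ₗ[S] smulSyzygy x ((f ∘ₗ π).coprod ρ))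
      (j : smulSyzygy x ((f ∘ₗ π).coprod ρ) →ₗ[S] smulSyzygy x (g ∘ₗ ρ)), IsSES i j := by
  refine ⟨smulSyzygyMap x f (LinearMap.inl S P F) (by simp),
    smulSyzygyMap x g (LinearMap.snd S P F) (by simp [h.apply_apply]),
    IsSES.of_forall (fun z hz => ?_) ?_ (fun z => ?_) ?_⟩
  · exact Subtype.ext (Prod.ext ((injective_iff_map_eq_zero f).1 h.1 _
      (congrArg (fun w => w.1.1) hz)) (congrArg (fun w => w.1.2.1) hz))
  · rintro ⟨⟨c, q⟩, hz⟩
    obtain ⟨b, rfl⟩ := h.2.1 c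
    obtain ⟨a, ha⟩ := h.exists_apply_eq (b := x • b + ρ q) (by simpa [mem_smulSyzygy] using hz)
    obtain ⟨p, rfl⟩ := hπ a
    exact ⟨⟨(b, -p, q), by simp [mem_smulSyzygy, ha]⟩, rfl⟩
  · exact Subtype.ext (Prod.ext (h.apply_apply _) rfl)
  · rintro ⟨⟨b, p, q⟩, hz⟩ hz0
    obtain rfl : q = 0 := congrArg (fun w => w.1.2) hz0
    obtain ⟨a, rfl⟩ := h.exists_apply_eq (b := b) (congrArg (fun w => w.1.1) hz0)
    refine ⟨⟨(a, p), mem_smulSyzygy.2 (h.1 ?_)⟩, rfl⟩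
    simpa [mem_smulSyzygy] using hz

/-- The bracket `[𝒳, x]`: the finitely generated modules `M` such that `smulSyzygy x π` lies
in `𝒳` for some surjection `π` onto `M` from a finitely generated projective module. -/
def smulSyzPreimage (x : S) (𝒳 : Set (ModuleCat.{u} S)) : Set (ModuleCat.{u} S) :=
  {M | ∃ (P : ModuleCat.{u} S) (π : P →ₗ[S] M), Module.Finite S P ∧ Module.Projective S P ∧
    Function.Surjective π ∧ Mem 𝒳 (smulSyzygy x π)}

lemma mem_smulSyzPreimage {x : S} [hfin : Module.Finite S P] [hproj : Module.Projective S P]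
    {π : P →ₗ[S] M} (hπ : Function.Surjective π) (hM : Mem 𝒳 (smulSyzygy x π)) :
    Mem (smulSyzPreimage x 𝒳) M :=
  ⟨ModuleCat.of S P, π, hfin, hproj, hπ, hM⟩

lemma finite_of_mem_smulSyzPreimage {x : S} (hM : Mem (smulSyzPreimage x 𝒳) M) :
    Module.Finite S M := by
  obtain ⟨P, π, _, _, hπ, -⟩ := hM
  exact Module.Finite.of_surjective π hπ

lemma smulSyzPreimage_mono (x : S) : Monotone (smulSyzPreimage x) := by
  rintro 𝒳 𝒴 h M ⟨P, π, hfin, hproj, hπ, hK⟩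
  exact ⟨P, π, hfin, hproj, hπ, h hK⟩

lemma projective_ker [Module.Projective S P] [Module.Projective S M] {π : P →ₗ[S] M}
    (hπ : Function.Surjective π) : Module.Projective S (LinearMap.ker π) := by
  obtain ⟨σ, hσ⟩ := Module.projective_lifting_property π LinearMap.id hπ
  obtain ⟨e, he, -⟩ := (isSES_ker_subtype hπ).exact.splitSurjectiveEquiv
    Subtype.val_injective ⟨σ, hσ⟩
  refine Module.Projective.of_split (LinearMap.ker π).subtype
    (LinearMap.fst S _ _ ∘ₗ e.toLinearMap) ?_
  rw [he]
  ext z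
  simp

namespace IsResolving

variable [IsNoetherianRing S]

lemma mem_smulSyzygy_of_mem (h𝒳 : IsResolving S 𝒳) {x : S} [Module.Finite S P]
    [Module.Projective S P] {π : P →ₗ[S] M} (hπ : Function.Surjective π)
    (hM : Mem (smulSyzPreimage x 𝒳) M) : Mem 𝒳 (smulSyzygy x π) := by
  obtain ⟨Q, ρ, _, _, hρ, hK⟩ := hM
  obtain ⟨i, j, hij⟩ := exists_isSES_smulSyzygy_coprod x hπ ρ
  obtain ⟨i', j', hij'⟩ := exists_isSES_smulSyzygy_coprod x hρ π
  have hswap : Mem 𝒳 (smulSyzygy x (π.coprod ρ)) :=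
    h𝒳.mem_of_retract (h𝒳.mem_of_extension hij' hK (h𝒳.mem_of_projective P))
      (smulSyzygyMap x LinearMap.id (LinearEquiv.prodComm S P Q).toLinearMap
        (by simp [add_comm]))
      (smulSyzygyMap x LinearMap.id (LinearEquiv.prodComm S Q P).toLinearMap
        (by simp [add_comm])) fun _ => rfl
  exact h𝒳.mem_of_kernel hij hswap (h𝒳.mem_of_projective Q)

lemma subset_smulSyzPreimage (h𝒳 : IsResolving S 𝒳) (x : S) : 𝒳 ⊆ smulSyzPreimage x 𝒳 := by
  intro M hM
  have := h𝒳.fg M hM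
  obtain ⟨P, π, _, _, hπ⟩ := exists_finite_projective_surjective (S := S) M
  exact mem_smulSyzPreimage hπ (h𝒳.mem_of_kernel
    (isSES_ker_subtype (surjective_smul_coprod x hπ))
    (h𝒳.mem_prod (A := M) hM (h𝒳.mem_of_projective P)) hM)

lemma mem_smulSyzPreimage_of_syzygy (h𝒳 : IsResolving S 𝒳) {x : S} [Module.Finite S P]
    [Module.Projective S P] {f : K →ₗ[S] P} {g : P →ₗ[S] M} (h : IsSES f g)
    (hM : Mem (syzPreimage 𝒳) (smulSyzygy x g)) : Mem (smulSyzPreimage x 𝒳) K := by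
  have : Module.Finite S K := Module.Finite.of_injective f h.1
  obtain ⟨Q, π, _, _, hπ⟩ := exists_finite_projective_surjective (S := S) K
  obtain ⟨i, j, hij⟩ := h.exists_isSES_smulSyzygy x hπ LinearMap.id
  have : Module.Projective S (smulSyzygy x ((f ∘ₗ π).coprod (LinearMap.id : P →ₗ[S] P))) :=
    projective_ker (surjective_smul_coprod x fun p => ⟨(0, p), by simp⟩)
  exact mem_smulSyzPreimage hπ (h𝒳.mem_of_mem_syzPreimage hij hM)

protected lemma smulSyzPreimage (h𝒳 : IsResolving S 𝒳) (x : S) :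
    IsResolving S (smulSyzPreimage x 𝒳) where
  fg M h := finite_of_mem_smulSyzPreimage h
  iso_closed := by
    rintro M N ⟨e⟩ ⟨P, π, hfin, hproj, hπ, hK⟩
    exact ⟨P, e.toLinearMap ∘ₗ π, hfin, hproj, e.surjective.comp hπ, h𝒳.mem_of_retract hK
      (smulSyzygyMap x e.symm.toLinearMap LinearMap.id (by simp))
      (smulSyzygyMap x e.toLinearMap LinearMap.id (by simp)) fun z => Subtype.ext (by simp)⟩
  proj_mem M _ _ := h𝒳.subset_smulSyzPreimage x (h𝒳.mem_of_projective M)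
  summand_closed M N h := by
    have := finite_of_mem_smulSyzPreimage (M := M × N) h
    have := Module.Finite.of_surjective (LinearMap.fst S M N) LinearMap.fst_surjective
    have := Module.Finite.of_surjective (LinearMap.snd S M N) LinearMap.snd_surjective
    obtain ⟨P, π, _, _, hπ⟩ := exists_finite_projective_surjective (S := S) M
    obtain ⟨Q, ρ, _, _, hρ⟩ := exists_finite_projective_surjective (S := S) N
    have hK : Mem 𝒳 (smulSyzygy x (π.prodMap ρ)) :=
      h𝒳.mem_smulSyzygy_of_mem (M := M × N) (Function.Surjective.prodMap hπ hρ) h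
    exact mem_smulSyzPreimage hπ (h𝒳.mem_of_retract hK
      (smulSyzygyMap x (LinearMap.inl S M N) (LinearMap.inl S P Q) (by simp))
      (smulSyzygyMap x (LinearMap.fst S M N) (LinearMap.fst S P Q) (by simp)) fun _ => rfl)
  ext_closed := by
    rintro A B C f g h ⟨P, π, _, _, hπ, hK⟩ hC
    have := finite_of_mem_smulSyzPreimage (M := C) hC
    obtain ⟨Q, ρ, _, _, hρ⟩ := exists_finite_projective_surjective (S := S) C
    obtain ⟨σ, rfl⟩ := Module.projective_lifting_property g ρ h.2.1
    obtain ⟨i, j, hij⟩ := h.exists_isSES_smulSyzygy x hπ σ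
    exact mem_smulSyzPreimage (M := B) (h.surjective_coprod hπ hρ)
      (h𝒳.mem_of_extension hij hK (h𝒳.mem_smulSyzygy_of_mem (M := C) hρ hC))
  syzygy_closed K P M f g h _ _ _ hM :=
    h𝒳.mem_smulSyzPreimage_of_syzygy (M := M) (K := K) h
      (h𝒳.subset_syzPreimage (h𝒳.mem_smulSyzygy_of_mem (M := M) h.2.1 hM))

lemma smulSyzPreimage_syzPreimage_subset (h𝒳 : IsResolving S 𝒳) (x : S) :
    smulSyzPreimage x (syzPreimage 𝒳) ⊆ syzPreimage (smulSyzPreimage x 𝒳) := by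
  rintro M ⟨P, π, hfin, hproj, hπ, hK⟩
  exact ⟨P, π, hfin, hproj, hπ, h𝒳.mem_smulSyzPreimage_of_syzygy (isSES_ker_subtype hπ) hK⟩

lemma foldr_smulSyzPreimage (h𝒳 : IsResolving S 𝒳) (l : List S) :
    IsResolving S (l.foldr smulSyzPreimage 𝒳) := by
  induction l with
  | nil => exact h𝒳
  | cons x l ih => exact ih.smulSyzPreimage x

lemma subset_foldr_smulSyzPreimage (h𝒳 : IsResolving S 𝒳) (l : List S) :
    𝒳 ⊆ l.foldr smulSyzPreimage 𝒳 := by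
  induction l with
  | nil => exact le_rfl
  | cons x l ih => exact ih.trans ((h𝒳.foldr_smulSyzPreimage l).subset_smulSyzPreimage x)

lemma foldr_smulSyzPreimage_syzPreimage_subset (h𝒳 : IsResolving S 𝒳) (l : List S) :
    l.foldr smulSyzPreimage (syzPreimage 𝒳) ⊆ syzPreimage (l.foldr smulSyzPreimage 𝒳) := by
  induction l with
  | nil => exact le_rfl
  | cons x l ih =>
    exact (smulSyzPreimage_mono x ih).trans
      ((h𝒳.foldr_smulSyzPreimage l).smulSyzPreimage_syzPreimage_subset x)

lemma foldr_smulSyzPreimage_iterate_subset (h𝒳 : IsResolving S 𝒳) (l : List S) (n : ℕ) :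
    l.foldr smulSyzPreimage (syzPreimage^[n] 𝒳) ⊆
      syzPreimage^[n] (l.foldr smulSyzPreimage 𝒳) := by
  induction n with
  | zero => exact le_rfl
  | succ n ih =>
    rw [Function.iterate_succ_apply', Function.iterate_succ_apply']
    exact ((h𝒳.iterate_syzPreimage n).foldr_smulSyzPreimage_syzPreimage_subset l).trans
      (syzPreimage_mono ih)

/-- Pairs `(m, p)` with `x m + π p = 0` project onto the syzygy `ker (P → M / x M)`, with kernel
the `x`-torsion of `M`. -/
lemma mem_smulSyzPreimage_of_quotSMulTop (h𝒳 : IsResolving S 𝒳) (x : S) [Module.Finite S M]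
    (htors : Mem 𝒳 (LinearMap.ker (x • LinearMap.id : M →ₗ[S] M)))
    (hquot : Mem (syzPreimage 𝒳) (QuotSMulTop x M)) : Mem (smulSyzPreimage x 𝒳) M := by
  obtain ⟨P, π, _, _, hπ⟩ := exists_finite_projective_surjective (S := S) M
  let q : M →ₗ[S] QuotSMulTop x M := Submodule.mkQ _
  have hq (m : M) : q m = 0 ↔ ∃ y, x • y = m := by
    simp [q, Submodule.mem_smul_pointwise_iff_exists]
  have hqπ : Function.Surjective (q ∘ₗ π) := (Submodule.mkQ_surjective _).comp hπ
  have hK := h𝒳.mem_of_mem_syzPreimage (isSES_ker_subtype hqπ) hquot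
  refine mem_smulSyzPreimage hπ (h𝒳.mem_of_extension
    (f := (LinearMap.inl S M P).restrict fun m hm => ?_)
    (g := (LinearMap.snd S M P).restrict fun z hz => ?_)
    (IsSES.of_forall (fun m hm => ?_) ?_ (fun _ => rfl) ?_) htors hK)
  · simpa [mem_smulSyzygy] using hm
  · refine (hq _).2 ⟨-z.1, ?_⟩
    rw [smul_neg, neg_eq_iff_add_eq_zero]
    exact mem_smulSyzygy.1 hz
  · exact Subtype.ext (congrArg (fun z => z.1.1) hm)
  · rintro ⟨p, hp⟩
    obtain ⟨y, hy⟩ := (hq _).1 hp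
    exact ⟨⟨(-y, p), by simp [mem_smulSyzygy, hy]⟩, rfl⟩
  · rintro ⟨⟨m, p⟩, hz⟩ hp
    obtain rfl : p = 0 := congrArg Subtype.val hp
    exact ⟨⟨m, by simpa [mem_smulSyzygy] using hz⟩, rfl⟩

end IsResolving

end SMulSyzygy

section SMulFactors

variable {S : Type u} [CommRing S] {𝒳 𝒴 : Set (ModuleCat.{u} S)}
variable {A B C K M P X : Type u}
  [AddCommGroup A] [Module S A] [AddCommGroup B] [Module S B] [AddCommGroup C] [Module S C]
  [AddCommGroup K] [Module S K] [AddCommGroup M] [Module S M]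
  [AddCommGroup P] [Module S P] [AddCommGroup X] [Module S X]

/-- Multiplication by `s` on `M` factors through a module in `𝒳`. -/
def SMulFactors (𝒳 : Set (ModuleCat.{u} S)) (M : Type u) [AddCommGroup M] [Module S M] (s : S) :
    Prop :=
  ∃ (X : ModuleCat.{u} S) (b : M →ₗ[S] X) (a : X →ₗ[S] M), X ∈ 𝒳 ∧ ∀ m, a (b m) = s • m

namespace SMulFactors

lemma of_mem {s : S} (hX : Mem 𝒳 X) (b : M →ₗ[S] X) (a : X →ₗ[S] M)
    (hab : ∀ m, a (b m) = s • m) : SMulFactors 𝒳 M s :=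
  ⟨ModuleCat.of S X, b, a, hX, hab⟩

lemma mono (h : 𝒳 ⊆ 𝒴) {s : S} (hs : SMulFactors 𝒳 M s) : SMulFactors 𝒴 M s := by
  obtain ⟨X, b, a, hX, hab⟩ := hs
  exact ⟨X, b, a, h hX, hab⟩

lemma of_linearEquiv {s : S} (e : K ≃ₗ[S] M) (hs : SMulFactors 𝒳 M s) : SMulFactors 𝒳 K s := by
  obtain ⟨X, b, a, hX, hab⟩ := hs
  exact ⟨X, b ∘ₗ e.toLinearMap, e.symm.toLinearMap ∘ₗ a, hX, fun k => by simp [hab]⟩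

/-- Factor through the pushout of `A → B ×_C Y` along `A → X`, where `A → X → A` and `C → Y → C`
are the given factorizations. -/
lemma of_extension (h𝒳 : IsResolving S 𝒳) {s t : S} {f : A →ₗ[S] B} {g : B →ₗ[S] C}
    (h : IsSES f g) (hA : SMulFactors 𝒳 A s) (hC : SMulFactors 𝒳 C t) :
    SMulFactors 𝒳 B (s * t) := by
  obtain ⟨X, b, a, hX, hab⟩ := hA
  obtain ⟨Y, d, c, hY, hcd⟩ := hC
  obtain ⟨i, hi, hses⟩ := fiberProduct.exists_isSES_snd c h
  obtain ⟨Z, k, p, j, hkp, -, -, hdesc⟩ := hses.exists_pushout b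
  obtain ⟨θ, -, hθ⟩ := hdesc B (f ∘ₗ a) (s • fiberProduct.fst g c) (by
    ext z
    simp [hab, fiberProduct.fst, hi])
  let δ : B →ₗ[S] fiberProduct g c :=
    LinearMap.codRestrict _ ((t • LinearMap.id).prod (d ∘ₗ g)) fun z => by
      simp [fiberProduct.mem_iff, hcd]
  refine of_mem (h𝒳.mem_of_extension (A := X) (C := Y) hkp hX hY) (j ∘ₗ δ) θ fun z => ?_
  have hθδ : θ (j (δ z)) = s • fiberProduct.fst g c (δ z) := LinearMap.congr_fun hθ (δ z)
  simp [hθδ, δ, fiberProduct.fst, mul_smul]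

/-- Lift a factorization `M → X → M` of `s` to `P → Q → P`; the lift of `s` differs from `s` by a
map through `P`. -/
lemma of_syzygy [IsNoetherianRing S] (h𝒳 : IsResolving S 𝒳) {s : S} [Module.Finite S P]
    [Module.Projective S P] {f : K →ₗ[S] P} {g : P →ₗ[S] M} (h : IsSES f g)
    (hM : SMulFactors 𝒳 M s) : SMulFactors 𝒳 K s := by
  obtain ⟨X, b, a, hX, hab⟩ := hM
  have := h𝒳.fg X hX
  obtain ⟨Q, π, _, _, hπ⟩ := exists_finite_projective_surjective (S := S) X
  obtain ⟨b', hb⟩ := Module.projective_lifting_property π (b ∘ₗ g) hπ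
  obtain ⟨a', ha⟩ := Module.projective_lifting_property g (a ∘ₗ π) h.2.1
  replace hb (p : P) : π (b' p) = b (g p) := LinearMap.congr_fun hb p
  replace ha (q : Q) : g (a' q) = a (π q) := LinearMap.congr_fun ha q
  have hL : Mem 𝒳 (LinearMap.ker π) := h𝒳.mem_of_syzygy (M := X) (isSES_ker_subtype hπ) hX
  refine of_linearEquiv h.kerEquiv (of_mem (h𝒳.mem_prod hL (h𝒳.mem_of_projective P))
    ((b'.restrict fun p hp => ?_).prod (LinearMap.ker g).subtype)
    ((a'.restrict fun q hq => ?_).coprod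
      (LinearMap.codRestrict _ (s • LinearMap.id - a' ∘ₗ b') fun p => ?_))
    fun p => Subtype.ext ?_)
  · simp [hb, LinearMap.mem_ker.1 hp]
  · simp [ha, LinearMap.mem_ker.1 hq]
  · simp [ha, hb, hab]
  · simp

lemma mem_of_mem_smulSyzPreimage (h𝒳 : IsResolving S 𝒳) {x : S} (hx : SMulFactors 𝒳 M x)
    (hM : Mem (smulSyzPreimage x 𝒳) M) : Mem 𝒳 M := by
  obtain ⟨X, b, a, hX, hab⟩ := hx
  obtain ⟨P, π, _, _, hπ, hK⟩ := hM
  obtain ⟨i, -, hi⟩ := fiberProduct.exists_isSES_snd (a.coprod π)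
    (isSES_ker_subtype (surjective_smul_coprod x hπ))
  have hQ := h𝒳.mem_of_extension hi hK (h𝒳.mem_prod (A := X) hX (h𝒳.mem_of_projective P))
  refine h𝒳.mem_of_retract hQ
    (LinearMap.codRestrict _ ((LinearMap.inl S M P).prod (LinearMap.inl S X P ∘ₗ b)) fun m => ?_)
    (LinearMap.fst S M P ∘ₗ fiberProduct.fst _ _) fun _ => rfl
  simp [fiberProduct.mem_iff, hab]

lemma mem_of_mem_foldr [IsNoetherianRing S] (h𝒳 : IsResolving S 𝒳) (l : List S)
    (hl : ∀ x ∈ l, SMulFactors 𝒳 M x) (hM : Mem (l.foldr smulSyzPreimage 𝒳) M) : Mem 𝒳 M := by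
  induction l with
  | nil => exact hM
  | cons x l ih =>
    rw [List.forall_mem_cons] at hl
    exact ih hl.2 (mem_of_mem_smulSyzPreimage (h𝒳.foldr_smulSyzPreimage l)
      (hl.1.mono (h𝒳.subset_foldr_smulSyzPreimage l)) hM)

end SMulFactors

/-- The ideal of all `s` such that multiplication by `s` on `M` factors through `𝒳`. -/
def smulFactorIdeal (h𝒳 : IsResolving S 𝒳) (M : Type u) [AddCommGroup M] [Module S M] :
    Ideal S where
  carrier := {s | SMulFactors 𝒳 M s}
  zero_mem' := SMulFactors.of_mem (h𝒳.mem_of_projective S) 0 0 (by simp)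
  add_mem' := by
    rintro s t ⟨X, b, a, hX, hab⟩ ⟨Y, d, c, hY, hcd⟩
    exact SMulFactors.of_mem (h𝒳.mem_prod (A := X) (B := Y) hX hY) (b.prod d) (a.coprod c)
      fun m => by simp [hab, hcd, add_smul]
  smul_mem' := by
    rintro r s ⟨X, b, a, hX, hab⟩
    exact ⟨X, b, r • a, hX, fun m => by simp [hab, mul_smul]⟩

lemma mem_smulFactorIdeal (h𝒳 : IsResolving S 𝒳) {s : S} :
    s ∈ smulFactorIdeal h𝒳 M ↔ SMulFactors 𝒳 M s :=
  Iff.rfl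

lemma mem_of_smulFactorIdeal_eq_top (h𝒳 : IsResolving S 𝒳) (h : smulFactorIdeal h𝒳 M = ⊤) :
    Mem 𝒳 M := by
  obtain ⟨X, b, a, hX, hab⟩ := (mem_smulFactorIdeal h𝒳).1 ((Ideal.eq_top_iff_one _).1 h)
  exact h𝒳.mem_of_retract (X := X) hX b a (by simpa using hab)

end SMulFactors

section AnnihilatorDevissage

open RingTheory.Sequence

variable {S : Type u} [CommRing S] {𝒳 : Set (ModuleCat.{u} S)}
variable {N : Type u} [AddCommGroup N] [Module S N]

lemma exists_ofList_eq [IsNoetherianRing S] (I : Ideal S) : ∃ l, Ideal.ofList l = I := by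
  obtain ⟨s, hs⟩ := (isNoetherian_def.1 ‹_›) I
  exact ⟨s.toList, by simpa [Ideal.ofList] using hs⟩

lemma le_annihilator_ker_smul {I : Ideal S} (hI : I ≤ Module.annihilator S N) (x : S) :
    I ⊔ Ideal.span {x} ≤ Module.annihilator S (LinearMap.ker (x • LinearMap.id : N →ₗ[S] N)) := by
  refine sup_le (hI.trans (LinearMap.annihilator_le_of_injective
    (Submodule.subtype _) Subtype.val_injective)) ?_
  rw [Ideal.span_singleton_le_iff_mem, Module.mem_annihilator]
  rintro ⟨n, hn⟩
  exact Subtype.ext hn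

lemma le_annihilator_quotSMulTop {I : Ideal S} (hI : I ≤ Module.annihilator S N) (x : S) :
    I ⊔ Ideal.span {x} ≤ Module.annihilator S (QuotSMulTop x N) := by
  refine sup_le (hI.trans (LinearMap.annihilator_le_of_surjective (Submodule.mkQ _)
    (Submodule.mkQ_surjective _))) ?_
  rw [Ideal.span_singleton_le_iff_mem]
  exact QuotSMulTop.mem_annihilator N x

namespace IsResolving

variable [IsNoetherianRing S]

lemma mem_foldr_smulSyzPreimage (h𝒳 : IsResolving S 𝒳) (l : List S) {I : Ideal S}
    (h : ∀ (N : Type u) [AddCommGroup N] [Module S N] [Module.Finite S N],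
      I ⊔ Ideal.ofList l ≤ Module.annihilator S N → Mem 𝒳 N)
    (N : Type u) [AddCommGroup N] [Module S N] [Module.Finite S N]
    (hN : I ≤ Module.annihilator S N) : Mem (l.foldr smulSyzPreimage 𝒳) N := by
  induction l generalizing I N with
  | nil => exact h N (by simpa using hN)
  | cons x l ih =>
    have hx (L : Type u) [AddCommGroup L] [Module S L] [Module.Finite S L]
        (hL : I ⊔ Ideal.span {x} ≤ Module.annihilator S L) :
        Mem (l.foldr smulSyzPreimage 𝒳) L :=
      ih (fun L _ _ _ hL' => h L (by rwa [Ideal.ofList_cons, ← sup_assoc])) L hL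
    have hl := h𝒳.foldr_smulSyzPreimage l
    exact hl.mem_smulSyzPreimage_of_quotSMulTop x (hx _ (le_annihilator_ker_smul hN x))
      (hl.subset_syzPreimage (hx _ (le_annihilator_quotSMulTop hN x)))

theorem mem_of_le_smulFactorIdeal (h𝒳 : IsResolving S 𝒳) {I : Ideal S}
    (h : ∀ (N : Type u) [AddCommGroup N] [Module S N] [Module.Finite S N],
      I ≤ Module.annihilator S N → Mem 𝒳 N)
    [Module.Finite S N] (hN : I ≤ smulFactorIdeal h𝒳 N) : Mem 𝒳 N := by
  obtain ⟨l, rfl⟩ := exists_ofList_eq I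
  exact SMulFactors.mem_of_mem_foldr h𝒳 l (fun x hx => hN (Ideal.subset_span hx))
    (h𝒳.mem_foldr_smulSyzPreimage l (I := ⊥) (by simpa using h) N bot_le)

lemma mem_foldr_of_isWeaklyRegular (h𝒳 : IsResolving S 𝒳) (rs : List S)
    (h : ∀ (N : Type u) [AddCommGroup N] [Module S N] [Module.Finite S N],
      Mem (syzPreimage^[rs.length] 𝒳) N)
    (N : Type u) [AddCommGroup N] [Module S N] [Module.Finite S N]
    (hN : IsWeaklyRegular N rs) : Mem (rs.foldr smulSyzPreimage 𝒳) N := by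
  induction rs generalizing N 𝒳 with
  | nil => exact h N
  | cons x rs ih =>
    obtain ⟨hx, hrs⟩ := (isWeaklyRegular_cons_iff N x rs).1 hN
    have hker : LinearMap.ker (x • LinearMap.id : N →ₗ[S] N) = ⊥ := LinearMap.ker_eq_bot.2 hx
    have hl := h𝒳.foldr_smulSyzPreimage rs
    refine hl.mem_smulSyzPreimage_of_quotSMulTop x ?_
      (h𝒳.foldr_smulSyzPreimage_syzPreimage_subset rs (ih h𝒳.syzPreimage h (QuotSMulTop x N) hrs))
    rw [hker]
    exact hl.mem_of_projective _

theorem mem_of_isWeaklyRegular (h𝒳 : IsResolving S 𝒳) {I : Ideal S} (rs : List S)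
    (h : ∀ (N : Type u) [AddCommGroup N] [Module S N] [Module.Finite S N],
      I ≤ Module.annihilator S N → Mem (syzPreimage^[rs.length] 𝒳) N)
    [Module.Finite S N] (hI : I ≤ smulFactorIdeal h𝒳 N) (hrs : ∀ x ∈ rs, x ∈ smulFactorIdeal h𝒳 N)
    (hreg : IsWeaklyRegular N rs) : Mem 𝒳 N := by
  obtain ⟨l, rfl⟩ := exists_ofList_eq I
  have hl := h𝒳.foldr_smulSyzPreimage l
  have hall (L : Type u) [AddCommGroup L] [Module S L] [Module.Finite S L] :
      Mem (syzPreimage^[rs.length] (l.foldr smulSyzPreimage 𝒳)) L :=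
    h𝒳.foldr_smulSyzPreimage_iterate_subset l rs.length
      ((h𝒳.iterate_syzPreimage rs.length).mem_foldr_smulSyzPreimage l (I := ⊥) (by simpa using h)
        L bot_le)
  exact SMulFactors.mem_of_mem_foldr h𝒳 l (fun x hx => hI (Ideal.subset_span hx))
    (SMulFactors.mem_of_mem_foldr hl rs
      (fun x hx => SMulFactors.mono (h𝒳.subset_foldr_smulSyzPreimage l) (hrs x hx))
      (hl.mem_foldr_of_isWeaklyRegular rs hall N hreg))

end IsResolving

end AnnihilatorDevissage

section ExtVanishing

open Abelian

variable {S : Type u} [CommRing S]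
variable {A B C M N X : Type u} [AddCommGroup A] [Module S A] [AddCommGroup B] [Module S B]
  [AddCommGroup C] [Module S C] [AddCommGroup M] [Module S M] [AddCommGroup N] [Module S N]
  [AddCommGroup X] [Module S X]

/-- The short complex underlying a short exact sequence of modules. -/
abbrev IsSES.shortComplex {f : A →ₗ[S] B} {g : B →ₗ[S] C} (h : IsSES f g) :
    ShortComplex (ModuleCat.{u} S) :=
  ShortComplex.mk (ModuleCat.ofHom f) (ModuleCat.ofHom g) (by ext a; exact h.apply_apply a)

lemma IsSES.shortExact {f : A →ₗ[S] B} {g : B →ₗ[S] C} (h : IsSES f g) :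
    h.shortComplex.ShortExact where
  exact := (ShortComplex.ShortExact.moduleCat_exact_iff_function_exact _).2 h.exact
  mono_f := (ModuleCat.mono_iff_injective _).2 h.1
  epi_g := (ModuleCat.epi_iff_surjective _).2 h.2.1

/-- Vanishing of `Ext^i(N, M)`. -/
def ExtVanishes (S : Type u) [CommRing S] (N M : Type u) [AddCommGroup N] [Module S N]
    [AddCommGroup M] [Module S M] (i : ℕ) : Prop :=
  Subsingleton (Ext (ModuleCat.of S N) (ModuleCat.of S M) i)

namespace ExtVanishes

variable {i : ℕ}

lemma of_forall (h : ∀ e : Ext (ModuleCat.of S N) (ModuleCat.of S M) i, e = 0) :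
    ExtVanishes S N M i :=
  ⟨fun a b => (h a).trans (h b).symm⟩

lemma eq_zero (h : ExtVanishes S N M i) (e : Ext (ModuleCat.of S N) (ModuleCat.of S M) i) :
    e = 0 :=
  h.elim _ _

lemma middle {f : A →ₗ[S] B} {g : B →ₗ[S] C} (h : IsSES f g) (hA : ExtVanishes S N A i)
    (hC : ExtVanishes S N C i) : ExtVanishes S N B i := by
  refine of_forall fun e => ?_
  obtain ⟨x, rfl⟩ := Ext.covariant_sequence_exact₂ _ h.shortExact e (hC.eq_zero _)
  rw [hA.eq_zero x, Ext.zero_comp]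

lemma right {f : A →ₗ[S] B} {g : B →ₗ[S] C} (h : IsSES f g) (hB : ExtVanishes S N B i)
    (hA : ExtVanishes S N A (i + 1)) : ExtVanishes S N C i := by
  refine of_forall fun e => ?_
  obtain ⟨x, rfl⟩ := Ext.covariant_sequence_exact₃ _ h.shortExact e rfl (hA.eq_zero _)
  rw [hB.eq_zero x, Ext.zero_comp]

lemma retract (b : M →ₗ[S] X) (a : X →ₗ[S] M) (hab : ∀ m, a (b m) = m)
    (hX : ExtVanishes S N X i) : ExtVanishes S N M i := by
  refine of_forall fun e => ?_
  have hid : ModuleCat.ofHom b ≫ ModuleCat.ofHom a = 𝟙 (ModuleCat.of S M) := by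
    ext m
    exact hab m
  rw [← Ext.comp_mk₀_id e, ← hid, ← Ext.mk₀_comp_mk₀,
    ← Ext.comp_assoc_of_third_deg_zero, hX.eq_zero (e.comp (Ext.mk₀ (ModuleCat.ofHom b)) _),
    Ext.zero_comp]

lemma of_subsingleton [Subsingleton M] : ExtVanishes S N M i := by
  refine of_forall fun e => ?_
  have hid : 𝟙 (ModuleCat.of S M) = 0 := by
    ext m
    exact Subsingleton.elim _ _
  rw [← Ext.comp_mk₀_id e, hid, Ext.mk₀_zero, Ext.comp_zero]

lemma left_zero {f : A →ₗ[S] B} (hf : Function.Injective f)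
    (h : ∀ e : Ext (ModuleCat.of S N) (ModuleCat.of S A) 0,
      e.comp (Ext.mk₀ (ModuleCat.ofHom f)) (add_zero 0) = 0) : ExtVanishes S N A 0 := by
  refine of_forall fun e => ?_
  have : Mono (ModuleCat.ofHom f) := (ModuleCat.mono_iff_injective _).2 hf
  exact Ext.postcomp_mk₀_injective_of_mono (ModuleCat.of S N) (ModuleCat.ofHom f)
    ((h e).trans (h 0).symm)

lemma left {f : A →ₗ[S] B} {g : B →ₗ[S] C} (h : IsSES f g)
    (hf : ∀ e : Ext (ModuleCat.of S N) (ModuleCat.of S A) (i + 1),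
      e.comp (Ext.mk₀ (ModuleCat.ofHom f)) (add_zero (i + 1)) = 0)
    (hC : ExtVanishes S N C i) : ExtVanishes S N A (i + 1) := by
  refine of_forall fun e => ?_
  obtain ⟨x, rfl⟩ := Ext.covariant_sequence_exact₁ _ h.shortExact e (hf e) rfl
  rw [hC.eq_zero x, Ext.zero_comp]

end ExtVanishes

lemma smul_ext_eq_zero {i : ℕ} {x : S} (hx : x ∈ Module.annihilator S N)
    (e : Ext (ModuleCat.of S N) (ModuleCat.of S M) i) : x • e = 0 := by
  have hid : x • 𝟙 (ModuleCat.of S N) = 0 := by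
    ext n
    exact Module.mem_annihilator.1 hx n
  rw [← Ext.mk₀_id_comp e, ← Ext.smul_comp, ← Ext.mk₀_smul, hid, Ext.mk₀_zero, Ext.zero_comp]

lemma ext_comp_mk₀_eq_zero {I : Ideal S} (hI : I ≤ Module.annihilator S N) {f : A →ₗ[S] B}
    (hf : f ∈ I • (⊤ : Submodule S (A →ₗ[S] B))) {i : ℕ}
    (e : Ext (ModuleCat.of S N) (ModuleCat.of S A) i) :
    e.comp (Ext.mk₀ (ModuleCat.ofHom f)) (add_zero i) = 0 := by
  induction hf using Submodule.smul_induction_on' with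
  | smul r hr w _ =>
    have hsmul : ModuleCat.ofHom (r • w) = r • ModuleCat.ofHom w := rfl
    rw [hsmul, Ext.mk₀_smul, Ext.comp_smul, ← Ext.smul_comp, smul_ext_eq_zero (hI hr),
      Ext.zero_comp]
  | add f _ g _ hf hg => rw [ModuleCat.ofHom_add, Ext.mk₀_add, Ext.comp_add, hf, hg, add_zero]

/-- By Nakayama, since `x` acts surjectively on `Ext^i(N, M)`. -/
lemma ExtVanishes.of_quotSMulTop [IsNoetherianRing S] [IsLocalRing S] [Module.Finite S N]
    [Module.Finite S M] {x : S} (hx : x ∈ IsLocalRing.maximalIdeal S) (hreg : IsSMulRegular N x)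
    {i : ℕ} (h : ExtVanishes S (QuotSMulTop x N) M (i + 1)) : ExtVanishes S N M i := by
  have hses : (ModuleCat.smulShortComplex (ModuleCat.of S N) x).ShortExact :=
    IsSMulRegular.smulShortComplex_shortExact (M := ModuleCat.of S N) hreg
  have hsurj (e : Ext (ModuleCat.of S N) (ModuleCat.of S M) i) : ∃ z, x • z = e := by
    obtain ⟨z, hz⟩ : ∃ z : Ext (ModuleCat.of S N) (ModuleCat.of S M) i,
        (Ext.mk₀ (x • 𝟙 (ModuleCat.of S N))).comp z (zero_add i) = e :=
      Ext.contravariant_sequence_exact₁ hses (ModuleCat.of S M) e (add_comm 1 i) (h.elim _ _)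
    exact ⟨z, by rwa [Ext.mk₀_smul, Ext.smul_comp, Ext.mk₀_id_comp] at hz⟩
  refine not_nontrivial_iff_subsingleton.1 fun _ => ?_
  refine Submodule.top_ne_pointwise_smul_of_mem_jacobson_annihilator
    (M := Ext (ModuleCat.of S N) (ModuleCat.of S M) i)
    (IsLocalRing.maximalIdeal_le_jacobson _ hx) (eq_top_iff.2 fun e _ => ?_).symm
  exact (Submodule.mem_smul_pointwise_iff_exists _ _ _).2 ((hsurj e).imp fun _ hz => ⟨trivial, hz⟩)

end ExtVanishing

section Depth

open RingTheory.Sequence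

variable {S : Type u} [CommRing S]
variable {A B C M N X : Type u} [AddCommGroup A] [Module S A] [AddCommGroup B] [Module S B]
  [AddCommGroup C] [Module S C] [AddCommGroup M] [Module S M] [AddCommGroup N] [Module S N]
  [AddCommGroup X] [Module S X]

lemma isWeaklyRegular_of_subsingleton (rs : List S) [Subsingleton M] : IsWeaklyRegular M rs := by
  induction rs generalizing M with
  | nil => exact IsWeaklyRegular.nil _ _
  | cons r rs ih =>
    have : Subsingleton (QuotSMulTop r M) := inferInstanceAs (Subsingleton (M ⧸ _))
    exact (isWeaklyRegular_cons_iff M r rs).2 ⟨fun _ _ _ => Subsingleton.elim _ _, ih⟩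

lemma exists_isWeaklyRegular_of_subsingleton [Subsingleton M] (I : Ideal S) (n : ℕ) :
    ∃ rs : List S, rs.length = n ∧ (∀ r ∈ rs, r ∈ I) ∧ IsWeaklyRegular M rs :=
  ⟨List.replicate n 0, List.length_replicate,
    fun _ hr => List.eq_of_mem_replicate hr ▸ I.zero_mem, isWeaklyRegular_of_subsingleton _⟩

lemma le_depthE_iff {n : ℕ} {I : Ideal S} : (n : ℕ∞) ≤ depthE S I M ↔
    ∃ rs : List S, rs.length = n ∧ (∀ r ∈ rs, r ∈ I) ∧ IsWeaklyRegular M rs := by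
  refine ⟨fun h => ?_, fun ⟨rs, hlen, hrs, hreg⟩ => hlen ▸ le_sSup ⟨rs, hrs, hreg, rfl⟩⟩
  obtain _ | k := n
  · exact ⟨[], rfl, by simp, IsWeaklyRegular.nil _ _⟩
  obtain ⟨_, ⟨rs, hrs, hreg, rfl⟩, hk⟩ :=
    lt_sSup_iff.1 ((Nat.cast_lt.2 k.lt_succ_self).trans_le h)
  have hk : k < rs.length := by exact_mod_cast hk
  rw [← List.take_append_drop (k + 1) rs, isWeaklyRegular_append_iff] at hreg
  exact ⟨rs.take (k + 1), List.length_take_of_le hk,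
    fun r hr => hrs r (List.mem_of_mem_take hr), hreg.1⟩

variable [IsLocalRing S]

open IsLocalRing

lemma support_residueField :
    Module.support S (ResidueField S) = PrimeSpectrum.zeroLocus (maximalIdeal S) := by
  change Module.support S (S ⧸ maximalIdeal S) = _
  rw [Module.support_eq_zeroLocus, Ideal.annihilator_quotient]

lemma maximalIdeal_le_annihilator_residueField :
    maximalIdeal S ≤ Module.annihilator S (ResidueField S) :=
  (Ideal.annihilator_quotient (I := maximalIdeal S)).ge

instance : Module.Finite S (ResidueField S) :=
  inferInstanceAs (Module.Finite S (S ⧸ maximalIdeal S))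

/-- The depth of the module `M` over the local ring `S` is at least `n`. -/
def DepthGE (S : Type u) [CommRing S] [IsLocalRing S] (n : ℕ) (M : Type u) [AddCommGroup M]
    [Module S M] : Prop :=
  (n : ℕ∞) ≤ depthE S (maximalIdeal S) M

namespace DepthGE

lemma zero : DepthGE S 0 M := by
  simp [DepthGE]

lemma mono {m n : ℕ} (h : m ≤ n) (hn : DepthGE S n M) : DepthGE S m M :=
  (Nat.cast_le.2 h).trans hn

lemma of_subsingleton [Subsingleton M] (n : ℕ) : DepthGE S n M :=
  le_depthE_iff.2 (exists_isWeaklyRegular_of_subsingleton _ n)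

end DepthGE

lemma smul_top_lt_top [Module.Finite S M] [Nontrivial M] {I : Ideal S}
    (hI : I ≤ maximalIdeal S) : I • (⊤ : Submodule S M) < ⊤ :=
  lt_top_iff_ne_top.2 (Submodule.top_ne_ideal_smul_of_le_jacobson_annihilator
    (hI.trans (maximalIdeal_le_jacobson _))).symm

section Noetherian

variable [IsNoetherianRing S]

lemma ExtVanishes.of_isWeaklyRegular [Module.Finite S M] [Module.Finite S N] {I : Ideal S}
    (hI : I ≤ maximalIdeal S) (hN : Module.support S N ⊆ PrimeSpectrum.zeroLocus I)
    {rs : List S} (hrs : ∀ r ∈ rs, r ∈ I) (hreg : IsWeaklyRegular M rs) {i : ℕ}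
    (hi : i < rs.length) : ExtVanishes S N M i := by
  obtain _ | _ := subsingleton_or_nontrivial M
  · exact .of_subsingleton
  · exact ModuleCat.subsingleton_ext_of_exists_isRegular I (ModuleCat.of S N) hN
      (ModuleCat.of S M) (smul_top_lt_top hI) rs hrs
      (IsRegular.of_isWeaklyRegular_of_mem_maximalIdeal _ (fun r hr => hI (hrs r hr)) hreg) i hi

lemma exists_isWeaklyRegular_of_extVanishes [Module.Finite S M] [Module.Finite S N] {I : Ideal S}
    (hI : I ≤ maximalIdeal S) (hN : Module.support S N = PrimeSpectrum.zeroLocus I) {n : ℕ}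
    (h : ∀ i < n, ExtVanishes S N M i) :
    ∃ rs : List S, rs.length = n ∧ (∀ r ∈ rs, r ∈ I) ∧ IsWeaklyRegular M rs := by
  obtain _ | _ := subsingleton_or_nontrivial M
  · exact exists_isWeaklyRegular_of_subsingleton I n
  have : Nontrivial N := by
    refine not_subsingleton_iff_nontrivial.1 fun _ => ?_
    have hmem : (⟨maximalIdeal S, inferInstance⟩ : PrimeSpectrum S) ∈ Module.support S N :=
      hN ▸ hI
    exact (Module.support_eq_empty (R := S) (M := N)).le hmem
  obtain ⟨rs, hlen, hrs, hreg⟩ := ModuleCat.exists_isRegular_of_exists_subsingleton_ext I n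
    (ModuleCat.of S M) (smul_top_lt_top hI) (ModuleCat.of S N) hN h
  exact ⟨rs, hlen, hrs, hreg.1⟩

lemma depthGE_iff [Module.Finite S M] {n : ℕ} :
    DepthGE S n M ↔ ∀ i < n, ExtVanishes S (ResidueField S) M i := by
  rw [DepthGE, le_depthE_iff]
  refine ⟨?_, exists_isWeaklyRegular_of_extVanishes le_rfl support_residueField⟩
  rintro ⟨rs, rfl, hrs, hreg⟩ i hi
  exact .of_isWeaklyRegular le_rfl support_residueField.le hrs hreg hi

namespace DepthGE

lemma retract {n : ℕ} [Module.Finite S M] [Module.Finite S X] (b : M →ₗ[S] X) (a : X →ₗ[S] M)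
    (hab : ∀ m, a (b m) = m) (hX : DepthGE S n X) : DepthGE S n M := by
  rw [depthGE_iff] at *
  exact fun i hi => .retract b a hab (hX i hi)

variable {n : ℕ} {f : A →ₗ[S] B} {g : B →ₗ[S] C} [Module.Finite S A] [Module.Finite S C]

lemma middle [Module.Finite S B] (h : IsSES f g) (hA : DepthGE S n A) (hC : DepthGE S n C) :
    DepthGE S n B := by
  rw [depthGE_iff] at *
  exact fun i hi => .middle h (hA i hi) (hC i hi)

lemma right [Module.Finite S B] (h : IsSES f g) (hB : DepthGE S n B) (hA : DepthGE S (n + 1) A) :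
    DepthGE S n C := by
  rw [depthGE_iff] at *
  exact fun i hi => .right h (hB i hi) (hA _ (by omega))

lemma left [Module.Finite S B] (h : IsSES f g) (hB : DepthGE S (n + 1) B) (hC : DepthGE S n C) :
    DepthGE S (n + 1) A := by
  rw [depthGE_iff] at *
  rintro (_ | i) hi
  · exact .left_zero h.1 fun e => (hB 0 hi).eq_zero _
  · exact .left h (fun e => (hB _ hi).eq_zero _) (hC i (by omega))

/-- Such an `f` induces zero on every `Ext^i(k, -)`, so the depth of `B` is irrelevant. -/
lemma left_of_mem_smul (h : IsSES f g)
    (hf : f ∈ maximalIdeal S • (⊤ : Submodule S (A →ₗ[S] B))) (hC : DepthGE S n C) :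
    DepthGE S (n + 1) A := by
  rw [depthGE_iff] at *
  rintro (_ | i) hi
  · exact .left_zero h.1 fun e => ext_comp_mk₀_eq_zero maximalIdeal_le_annihilator_residueField hf e
  · exact .left h (fun e => ext_comp_mk₀_eq_zero maximalIdeal_le_annihilator_residueField hf e)
      (hC i (by omega))

end DepthGE

end Noetherian

end Depth

section PrimesBelow

open RingTheory.Sequence IsLocalRing
open scoped Pointwise

/-- `Ext^i(S/P, M)` vanishes for `i < n`, as `Ext^{i+1}(S/(P + x), M)` does for any `x ∉ P`. -/
lemma DepthGE.exists_isWeaklyRegular_of_lt {S : Type u} [CommRing S] [IsLocalRing S]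
    [IsNoetherianRing S] {M : Type u} [AddCommGroup M] [Module S M] [Module.Finite S M]
    {P : Ideal S} [hPprime : P.IsPrime] (hP : P < maximalIdeal S)
    (hmax : ∀ Q : Ideal S, Q.IsPrime → P < Q → Q = maximalIdeal S) {n : ℕ}
    (h : DepthGE S (n + 1) M) :
    ∃ rs : List S, rs.length = n ∧ (∀ r ∈ rs, r ∈ P) ∧ IsWeaklyRegular M rs := by
  obtain ⟨x, hx, hxP⟩ := SetLike.exists_of_lt hP
  have hreg : IsSMulRegular (S ⧸ P) x := by
    refine isSMulRegular_iff_right_eq_zero_of_smul.2 fun a ha => ?_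
    obtain ⟨a, rfl⟩ := Ideal.Quotient.mk_surjective a
    have ha : Ideal.Quotient.mk P (x * a) = 0 := ha
    rw [Ideal.Quotient.eq_zero_iff_mem] at ha ⊢
    exact (hPprime.mem_or_mem ha).resolve_left hxP
  have hsupp : Module.support S (S ⧸ P) = PrimeSpectrum.zeroLocus P := by
    rw [Module.support_eq_zeroLocus, Ideal.annihilator_quotient]
  have hsupp_quot : Module.support S (QuotSMulTop x (S ⧸ P)) ⊆
      PrimeSpectrum.zeroLocus (maximalIdeal S) := by
    rw [Module.support_quotSMulTop, hsupp]
    rintro Q ⟨hPQ, hxQ⟩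
    exact (hmax Q.asIdeal Q.2 (lt_of_le_of_ne hPQ fun h =>
      hxP (h.ge (Set.singleton_subset_iff.1 hxQ)))).ge
  obtain ⟨rs, hlen, hrs, hrsreg⟩ := le_depthE_iff.1 h
  refine exists_isWeaklyRegular_of_extVanishes hP.le hsupp fun i hi => ?_
  exact .of_quotSMulTop hx hreg (.of_isWeaklyRegular le_rfl hsupp_quot hrs hrsreg (by omega))

lemma isWeaklyRegular_cons_of_associated {S : Type u} [CommRing S] {M : Type u} [AddCommGroup M]
    [Module S M] {r r' : S} (h : Associated r r') {rs : List S}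
    (hreg : IsWeaklyRegular M (r :: rs)) : IsWeaklyRegular M (r' :: rs) := by
  obtain ⟨v, rfl⟩ := h
  rw [isWeaklyRegular_cons_iff] at hreg ⊢
  have htop : r • (⊤ : Submodule S M) = (r * v) • (⊤ : Submodule S M) := by
    rw [← Submodule.ideal_span_singleton_smul, ← Submodule.ideal_span_singleton_smul,
      Ideal.span_singleton_mul_right_unit v.isUnit]
  exact ⟨hreg.1.mul (v.isUnit.isSMulRegular M),
    ((Submodule.quotEquivOfEq _ _ htop).isWeaklyRegular_congr rs).1 hreg.2⟩

lemma exists_isWeaklyRegular_map_algebraMap {S S' : Type u} [CommRing S] [CommRing S']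
    [Algebra S S'] (T : Submonoid S) [IsLocalization T S'] {I : Ideal S} {rs : List S'}
    (hrs : ∀ r ∈ rs, r ∈ I.map (algebraMap S S')) {M : Type u} [AddCommGroup M] [Module S' M]
    (hreg : IsWeaklyRegular M rs) :
    ∃ rs' : List S, rs'.length = rs.length ∧ (∀ r ∈ rs', r ∈ I) ∧
      IsWeaklyRegular M (rs'.map (algebraMap S S')) := by
  induction rs generalizing M with
  | nil => exact ⟨[], rfl, by simp, IsWeaklyRegular.nil _ _⟩
  | cons r rs ih =>
    obtain ⟨⟨a, s⟩, has⟩ :=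
      (IsLocalization.mem_map_algebraMap_iff T S').1 (hrs r List.mem_cons_self)
    obtain ⟨hr, htail⟩ := (isWeaklyRegular_cons_iff M r rs).1 hreg
    obtain ⟨rs', hlen, hmem, hreg'⟩ := ih (fun r hr => hrs r (List.mem_cons_of_mem _ hr)) htail
    refine ⟨a :: rs', congrArg (· + 1) hlen, List.forall_mem_cons.2 ⟨a.2, hmem⟩, ?_⟩
    exact isWeaklyRegular_cons_of_associated ⟨(IsLocalization.map_units S' s).unit, has⟩
      ((isWeaklyRegular_cons_iff M r _).2 ⟨hr, hreg'⟩)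

end PrimesBelow

section LocalDepth

open IsLocalRing

variable {R}

/-- The local ring `R_p`. -/
abbrev RingAt (p : PrimeSpectrum R) : Type u := Localization.AtPrime p.asIdeal

variable {A B C M X : Type u} [AddCommGroup A] [Module R A] [AddCommGroup B] [Module R B]
  [AddCommGroup C] [Module R C] [AddCommGroup M] [Module R M] [AddCommGroup X] [Module R X]

variable (M) in
/-- The `R_p`-module `M_p`. -/
abbrev ModuleAt (p : PrimeSpectrum R) : Type u := LocalizedModule p.asIdeal.primeCompl M

/-- Localization of linear maps at `p`. -/
noncomputable abbrev mapAt (p : PrimeSpectrum R) :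
    (A →ₗ[R] B) →ₗ[R] ModuleAt A p →ₗ[RingAt p] ModuleAt B p :=
  LocalizedModule.map p.asIdeal.primeCompl

variable {p : PrimeSpectrum R}

lemma IsSES.mapAt {f : A →ₗ[R] B} {g : B →ₗ[R] C} (h : IsSES f g) :
    IsSES (mapAt p f) (mapAt p g) :=
  isSES_iff_exact.2 ⟨LocalizedModule.map_injective _ _ h.1,
    LocalizedModule.map_surjective _ _ h.2.1, LocalizedModule.map_exact _ f g h.exact⟩

lemma mapAt_mk (f : A →ₗ[R] B) (a : A) (s : p.asIdeal.primeCompl) :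
    mapAt p f (LocalizedModule.mk a s) = LocalizedModule.mk (f a) s :=
  LocalizedModule.map_mk ..

lemma algebraMap_mem_maximalIdeal {x : R} (hx : x ∈ p.asIdeal) :
    algebraMap R (RingAt p) x ∈ maximalIdeal (RingAt p) :=
  Localization.AtPrime.map_eq_maximalIdeal (I := p.asIdeal) ▸ Ideal.mem_map_of_mem _ hx

lemma isUnit_algebraMap_of_notMem {s : R} (hs : s ∉ p.asIdeal) :
    IsUnit (algebraMap R (RingAt p) s) :=
  IsLocalization.map_units (RingAt p) (⟨s, hs⟩ : p.asIdeal.primeCompl)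

lemma mapAt_mapAt_eq_smul {b : M →ₗ[R] X} {a : X →ₗ[R] M} {s : R} (hab : ∀ m, a (b m) = s • m)
    (m : ModuleAt M p) : mapAt p a (mapAt p b m) = algebraMap R (RingAt p) s • m := by
  induction m using LocalizedModule.induction_on with
  | h m t => rw [mapAt_mk, mapAt_mk, hab, algebraMap_smul, LocalizedModule.smul'_mk]

lemma exists_leftInverse_mapAt {b : M →ₗ[R] X} {a : X →ₗ[R] M} {s : R} (hs : s ∉ p.asIdeal)
    (hab : ∀ m, a (b m) = s • m) :
    ∃ a' : ModuleAt X p →ₗ[RingAt p] ModuleAt M p, ∀ m, a' (mapAt p b m) = m := by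
  obtain ⟨v, hv⟩ := isUnit_algebraMap_of_notMem hs
  refine ⟨(↑v⁻¹ : RingAt p) • mapAt p a, fun m => ?_⟩
  rw [LinearMap.smul_apply, mapAt_mapAt_eq_smul hab, ← hv, smul_smul, Units.inv_mul, one_smul]

lemma mapAt_mem_smul {f : A →ₗ[R] B} (hf : f ∈ p.asIdeal • (⊤ : Submodule R (A →ₗ[R] B))) :
    mapAt p f ∈ maximalIdeal (RingAt p) •
      (⊤ : Submodule (RingAt p) (ModuleAt A p →ₗ[RingAt p] ModuleAt B p)) := by
  induction hf using Submodule.smul_induction_on' with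
  | smul x hx w _ =>
    rw [map_smul, ← algebraMap_smul (RingAt p) x]
    exact Submodule.smul_mem_smul (algebraMap_mem_maximalIdeal hx) trivial
  | add f _ g _ hf hg => rw [map_add]; exact add_mem hf hg

/-- The depth of `M_p` is at least `n`. -/
def LocalDepthGE (p : PrimeSpectrum R) (n : ℕ) (M : Type u) [AddCommGroup M] [Module R M] :
    Prop :=
  DepthGE (RingAt p) n (ModuleAt M p)

namespace LocalDepthGE

variable {n : ℕ}

lemma zero : LocalDepthGE p 0 M :=
  DepthGE.zero

lemma mono {m : ℕ} (h : m ≤ n) (hn : LocalDepthGE p n M) : LocalDepthGE p m M :=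
  DepthGE.mono h hn

lemma of_smul_eq_zero {s : R} (hs : s ∉ p.asIdeal) (h : ∀ m : M, s • m = 0) (n : ℕ) :
    LocalDepthGE p n M := by
  have : Subsingleton (ModuleAt M p) :=
    LocalizedModule.subsingleton_iff.2 fun m => ⟨s, hs, h m⟩
  exact DepthGE.of_subsingleton n

variable [IsNoetherianRing R]

lemma of_smul_retract [Module.Finite R M] [Module.Finite R X] {s : R} (hs : s ∉ p.asIdeal)
    (b : M →ₗ[R] X) (a : X →ₗ[R] M) (hab : ∀ m, a (b m) = s • m) (hX : LocalDepthGE p n X) :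
    LocalDepthGE p n M := by
  obtain ⟨a', ha'⟩ := exists_leftInverse_mapAt hs hab
  exact DepthGE.retract (mapAt p b) a' ha' hX

lemma retract [Module.Finite R M] [Module.Finite R X] (b : M →ₗ[R] X) (a : X →ₗ[R] M)
    (hab : ∀ m, a (b m) = m) (hX : LocalDepthGE p n X) : LocalDepthGE p n M :=
  of_smul_retract p.2.one_notMem b a (fun m => (hab m).trans (one_smul R m).symm) hX

lemma of_linearEquiv [Module.Finite R M] [Module.Finite R X] (e : M ≃ₗ[R] X)
    (hX : LocalDepthGE p n X) : LocalDepthGE p n M :=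
  hX.retract e.toLinearMap e.symm.toLinearMap e.symm_apply_apply

variable {f : A →ₗ[R] B} {g : B →ₗ[R] C} [Module.Finite R A] [Module.Finite R C]

lemma middle [Module.Finite R B] (h : IsSES f g) (hA : LocalDepthGE p n A)
    (hC : LocalDepthGE p n C) : LocalDepthGE p n B :=
  DepthGE.middle h.mapAt hA hC

lemma right [Module.Finite R B] (h : IsSES f g) (hB : LocalDepthGE p n B)
    (hA : LocalDepthGE p (n + 1) A) : LocalDepthGE p n C :=
  DepthGE.right h.mapAt hB hA

lemma left [Module.Finite R B] (h : IsSES f g) (hB : LocalDepthGE p (n + 1) B)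
    (hC : LocalDepthGE p n C) : LocalDepthGE p (n + 1) A :=
  DepthGE.left h.mapAt hB hC

lemma left_of_mem_smul (h : IsSES f g) (hf : f ∈ p.asIdeal • (⊤ : Submodule R (A →ₗ[R] B)))
    (hC : LocalDepthGE p n C) : LocalDepthGE p (n + 1) A :=
  DepthGE.left_of_mem_smul h.mapAt (mapAt_mem_smul hf) hC

lemma pi (h : LocalDepthGE p n A) (m : ℕ) : LocalDepthGE p n (Fin m → A) := by
  induction m with
  | zero => exact of_smul_eq_zero p.2.one_notMem (fun _ => Subsingleton.elim _ _) n
  | succ m ih =>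
    exact of_linearEquiv (Fin.consLinearEquiv R fun _ => A).symm (middle isSES_inl_snd h ih)

end LocalDepthGE

end LocalDepth

section Codepth

open RingTheory.Sequence IsLocalRing

variable {R} {p q : PrimeSpectrum R} {M : Type u} [AddCommGroup M] [Module R M]

lemma isPrime_map_of_le (hpq : p ≤ q) : (p.asIdeal.map (algebraMap R (RingAt q))).IsPrime :=
  IsLocalization.isPrime_of_isPrime_disjoint q.asIdeal.primeCompl _ _ p.2
    (Set.disjoint_left.2 fun _ hx hx' => hx (hpq hx'))

lemma comap_map_of_le (hpq : p ≤ q) :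
    (p.asIdeal.map (algebraMap R (RingAt q))).comap (algebraMap R (RingAt q)) = p.asIdeal :=
  IsLocalization.under_map_of_isPrime_disjoint q.asIdeal.primeCompl _ p.2
    (Set.disjoint_left.2 fun _ hx hx' => hx (hpq hx'))

lemma map_lt_maximalIdeal (hpq : p < q) :
    p.asIdeal.map (algebraMap R (RingAt q)) < maximalIdeal (RingAt q) := by
  refine lt_of_le_of_ne (le_maximalIdeal (isPrime_map_of_le hpq.le).ne_top) fun h => ?_
  have hcomap := comap_map_of_le hpq.le
  rw [h] at hcomap
  exact hpq.ne (PrimeSpectrum.ext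
    (hcomap.symm.trans (Localization.AtPrime.under_maximalIdeal (I := q.asIdeal))))

lemma eq_maximalIdeal_of_map_lt_of_covBy (hpq : p ⋖ q) {Q : Ideal (RingAt q)} (hQ : Q.IsPrime)
    (hlt : p.asIdeal.map (algebraMap R (RingAt q)) < Q) : Q = maximalIdeal (RingAt q) := by
  let Q' : PrimeSpectrum R := ⟨Q.comap (algebraMap R (RingAt q)), inferInstance⟩
  have hmap : Q'.asIdeal.map (algebraMap R (RingAt q)) = Q :=
    IsLocalization.map_under q.asIdeal.primeCompl _ Q
  have hQ'q : Q' ≤ q := (Ideal.comap_mono (le_maximalIdeal hQ.ne_top)).trans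
    (Localization.AtPrime.under_maximalIdeal (I := q.asIdeal)).le
  have hpQ' : p < Q' := by
    refine lt_of_le_of_ne ((comap_map_of_le hpq.1.le).ge.trans (Ideal.comap_mono hlt.le)) ?_
    rintro h
    exact hlt.ne (h ▸ hmap)
  rw [← hmap, hQ'q.eq_of_not_lt (hpq.2 hpQ'), Localization.AtPrime.map_eq_maximalIdeal]

lemma LocalDepthGE.of_covBy [IsNoetherianRing R] [Module.Finite R M] (hpq : p ⋖ q) {n : ℕ}
    (hq : LocalDepthGE q (n + 1) M) : LocalDepthGE p n M := by
  have := isPrime_map_of_le hpq.1.le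
  obtain ⟨rs, hlen, hrs, hreg⟩ := DepthGE.exists_isWeaklyRegular_of_lt
    (map_lt_maximalIdeal hpq.1) (fun _ => eq_maximalIdeal_of_map_lt_of_covBy hpq) hq
  obtain ⟨rs', hlen', hrs', hreg'⟩ :=
    exists_isWeaklyRegular_map_algebraMap q.asIdeal.primeCompl hrs hreg
  have hregR : IsWeaklyRegular (ModuleAt M q) rs' :=
    (isWeaklyRegular_map_algebraMap_iff (RingAt q) (ModuleAt M q) rs').1 hreg'
  have hle : q.asIdeal.primeCompl ≤ p.asIdeal.primeCompl := fun _ hx hx' => hx (hpq.1.le hx')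
  refine le_depthE_iff.2 ⟨rs'.map (algebraMap R (RingAt p)), by simp [hlen', hlen], ?_,
    hregR.of_isLocalizedModule (RingAt p) p.asIdeal.primeCompl
      (LocalizedModule.liftOfLE q.asIdeal.primeCompl p.asIdeal.primeCompl hle (M := M))⟩
  exact List.forall_mem_map.2 fun r hr => algebraMap_mem_maximalIdeal (hrs' r hr)

/-- The height of a prime as a natural number, meaningful for noetherian rings. -/
noncomputable def natHeight (p : PrimeSpectrum R) : ℕ :=
  (heightE R p).toNat

section Noetherian

variable [IsNoetherianRing R]

lemma coe_natHeight : (natHeight p : ℕ∞) = heightE R p := by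
  refine ENat.natCast_toNat ?_
  rw [heightE, ← PrimeSpectrum.height_eq_orderHeight]
  exact Ideal.height_ne_top_of_isPrime

lemma natHeight_strictMono : StrictMono (natHeight (R := R)) := fun p q h => by
  have hfin : heightE R p < ⊤ := coe_natHeight (p := p) ▸ ENat.natCast_lt_top _
  have hlt : heightE R p < heightE R q := Order.height_strictMono h hfin
  rwa [← coe_natHeight, ← coe_natHeight, Nat.cast_lt] at hlt

variable (R) in
lemma wellFoundedGT_primeSpectrum : WellFoundedGT (PrimeSpectrum R) :=
  StrictMono.wellFoundedGT (f := PrimeSpectrum.asIdeal) fun _ _ h => h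

variable (p) in
/-- The localization of `R` as a module is the ring `R_p`. -/
noncomputable def moduleAtSelfEquiv : ModuleAt R p ≃ₗ[RingAt p] RingAt p :=
  (IsLocalizedModule.iso p.asIdeal.primeCompl
    (Algebra.linearMap R (RingAt p))).extendScalarsOfIsLocalization p.asIdeal.primeCompl (RingAt p)

lemma localDepthGE_self_iff (hp : IsCMLocalRing (RingAt p)) {n : ℕ} :
    LocalDepthGE p n R ↔ n ≤ natHeight p := by
  let e := moduleAtSelfEquiv p
  have hself : LocalDepthGE p n R ↔ DepthGE (RingAt p) n (RingAt p) :=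
    ⟨DepthGE.retract e.symm.toLinearMap e.toLinearMap e.apply_symm_apply,
      DepthGE.retract e.toLinearMap e.symm.toLinearMap e.symm_apply_apply⟩
  have hdepth := hp.2
  rw [IsLocalization.AtPrime.ringKrullDim_eq_height p.asIdeal,
    PrimeSpectrum.height_eq_orderHeight, ← heightE, ← coe_natHeight] at hdepth
  rw [hself, DepthGE, WithBot.coe_eq_coe.1 hdepth, Nat.cast_le]

end Noetherian

/-- The codepth `ht p - depth M_p` is at most `c`. The subtraction `natHeight p - c` truncates,
as there is no condition when `c` is at least the height. -/
def CodepthLE (p : PrimeSpectrum R) (c : ℕ) (M : Type u) [AddCommGroup M] [Module R M] : Prop :=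
  LocalDepthGE p (natHeight p - c) M

lemma CodepthLE.of_le [IsNoetherianRing R] [Module.Finite R M] {c : ℕ} (hpq : p ≤ q)
    (hq : CodepthLE q c M) : CodepthLE p c M := by
  induction hk : natHeight q using Nat.strong_induction_on generalizing q with
  | _ k ih =>
    obtain rfl | hlt := hpq.eq_or_lt
    · exact hq
    have := wellFoundedGT_primeSpectrum R
    obtain ⟨r, hpr, hrq⟩ := exists_le_covBy_of_lt hlt
    have hheight := natHeight_strictMono hrq.1
    refine ih _ (hk ▸ hheight) hpr ?_ rfl
    unfold CodepthLE at hq ⊢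
    cases hr : natHeight r - c with
    | zero => exact .zero
    | succ n => exact .of_covBy hrq (hq.mono (by omega))

end Codepth

section LocalResolving

open IsLocalRing RingTheory.Sequence Abelian
open scoped Pointwise

variable {S : Type u} [CommRing S] [IsNoetherianRing S] {𝒳 : Set (ModuleCat.{u} S)}
variable {A B C N X : Type u} [AddCommGroup A] [Module S A] [AddCommGroup B] [Module S B]
  [AddCommGroup C] [Module S C] [AddCommGroup N] [Module S N] [AddCommGroup X] [Module S X]

lemma IsResolving.mem_of_mem_syzPreimage_right (h𝒳 : IsResolving S 𝒳) {f : A →ₗ[S] B}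
    {g : B →ₗ[S] C} (h : IsSES f g) (hB : Mem 𝒳 B) (hC : Mem (syzPreimage 𝒳) C) : Mem 𝒳 A := by
  obtain ⟨P, π, hfin, hproj, hπ, hK⟩ := hC
  obtain ⟨i, -, hi⟩ := fiberProduct.exists_isSES_snd π h
  obtain ⟨j, hj⟩ := fiberProduct.exists_isSES_fst g (isSES_ker_subtype hπ)
  exact h𝒳.mem_of_kernel hi (h𝒳.mem_of_extension hj hK hB) (h𝒳.mem_of_projective P)

variable [IsLocalRing S]

lemma IsResolving.mem_of_pow_le_annihilator (h𝒳 : IsResolving S 𝒳)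
    (hk : Mem 𝒳 (ResidueField S)) {n : ℕ} [hN : Module.Finite S N]
    (h : maximalIdeal S ^ n ≤ Module.annihilator S N) : Mem 𝒳 N := by
  revert h
  refine IsNoetherianRing.induction_on_isQuotientEquivQuotientPrime S hN
    (motive := fun N _ _ _ => maximalIdeal S ^ n ≤ Module.annihilator S N → Mem 𝒳 N) ?_ ?_ ?_
  · intro N _ _ _ _ _
    have : Module.Projective S N := inferInstance
    exact h𝒳.mem_of_projective N
  · intro N _ _ _ p e h
    have hp : p.asIdeal = maximalIdeal S := by
      rw [e.annihilator_eq, Ideal.annihilator_quotient] at h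
      exact le_antisymm (le_maximalIdeal p.2.ne_top) (p.2.le_of_pow_le h)
    exact h𝒳.mem_of_linearEquiv (e.trans (Submodule.quotEquivOfEq _ _ hp)).symm hk
  · intro A _ _ _ B _ _ _ C _ _ _ f g hf hg hfg hA hC h
    exact h𝒳.mem_of_extension (isSES_iff_exact.2 ⟨hf, hg, hfg⟩)
      (hA (h.trans (f.annihilator_le_of_injective hf)))
      (hC (h.trans (g.annihilator_le_of_surjective hg)))

lemma IsResolving.mem_of_pow_le_smulFactorIdeal (h𝒳 : IsResolving S 𝒳) {t : ℕ}
    (hk : Mem (syzPreimage^[t] 𝒳) (ResidueField S)) [Module.Finite S N] (hN : DepthGE S t N)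
    {n : ℕ} (h : maximalIdeal S ^ n ≤ smulFactorIdeal h𝒳 N) : Mem 𝒳 N := by
  by_cases htop : smulFactorIdeal h𝒳 N = ⊤
  · exact mem_of_smulFactorIdeal_eq_top h𝒳 htop
  have hle : smulFactorIdeal h𝒳 N ≤ maximalIdeal S := le_maximalIdeal htop
  have hsupp : Module.support S (ResidueField S) =
      PrimeSpectrum.zeroLocus (smulFactorIdeal h𝒳 N) := by
    rw [support_residueField]
    exact (PrimeSpectrum.zeroLocus_anti_mono hle).antisymm
      fun Q hQ => Q.2.le_of_pow_le (h.trans hQ)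
  obtain ⟨rs, rfl, hrs, hreg⟩ :=
    exists_isWeaklyRegular_of_extVanishes hle hsupp (depthGE_iff.1 hN)
  exact h𝒳.mem_of_isWeaklyRegular rs
    (fun N' _ _ _ hN' => (h𝒳.iterate_syzPreimage _).mem_of_pow_le_annihilator hk (h.trans hN'))
    le_rfl hrs hreg

lemma DepthGE.of_quotSMulTop {r : S} (hr : r ∈ maximalIdeal S) (hreg : IsSMulRegular X r)
    [Module.Finite S X] {n : ℕ} (h : DepthGE S n (QuotSMulTop r X)) : DepthGE S (n + 1) X :=
  .left_of_mem_smul (isSES_smul_mkQ hreg) (Submodule.smul_mem_smul hr trivial) h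

lemma IsResolving.exists_mem_not_depthGE_one (h𝒳 : IsResolving S 𝒳) (hX : Mem 𝒳 X) {rs : List S}
    (hrs : ∀ r ∈ rs, r ∈ maximalIdeal S) (hreg : IsWeaklyRegular X rs)
    (hdepth : ¬ DepthGE S (rs.length + 1) X) :
    ∃ Y : ModuleCat.{u} S, Y ∈ syzPreimage^[rs.length] 𝒳 ∧ ¬ DepthGE S 1 Y := by
  induction rs generalizing 𝒳 X with
  | nil => exact ⟨ModuleCat.of S X, hX, hdepth⟩
  | cons r rs ih =>
    obtain ⟨hr, hreg⟩ := (isWeaklyRegular_cons_iff X r rs).1 hreg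
    obtain ⟨hr_mem, hrs⟩ := List.forall_mem_cons.1 hrs
    have := h𝒳.finite_of_mem hX
    exact ih h𝒳.syzPreimage (h𝒳.mem_syzPreimage_of_cokernel (isSES_smul_mkQ hr) hX hX) hrs hreg
      fun h => hdepth (.of_quotSMulTop hr_mem hr h)

lemma exists_injective_of_not_depthGE_one [Module.Finite S X] (h : ¬ DepthGE S 1 X) :
    ∃ f : ResidueField S →ₗ[S] X, Function.Injective f := by
  have : IsSimpleModule S (ResidueField S) :=
    isSimpleModule_iff_quot_maximal.2 ⟨maximalIdeal S, inferInstance, ⟨LinearEquiv.refl _ _⟩⟩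
  contrapose! h
  refine depthGE_iff.2 fun i hi => ?_
  obtain rfl : i = 0 := by omega
  refine .of_forall fun e => ?_
  obtain ⟨φ, rfl⟩ := (Ext.addEquiv₀ (X := ModuleCat.of S (ResidueField S))
    (Y := ModuleCat.of S X)).symm.surjective e
  rw [EmbeddingLike.map_eq_zero_iff]
  exact ModuleCat.hom_ext (φ.hom.injective_or_eq_zero.resolve_left (h φ.hom))

lemma IsResolving.mem_residueField_of_mem_syzPreimage (h𝒳 : IsResolving S 𝒳) (hX : Mem 𝒳 X)
    (hdepth : ¬ DepthGE S 1 X) (hk : Mem (syzPreimage 𝒳) (ResidueField S)) :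
    Mem 𝒳 (ResidueField S) := by
  have := h𝒳.finite_of_mem hX
  obtain ⟨f, hf⟩ := exists_injective_of_not_depthGE_one hdepth
  have hses := isSES_mkQ_range hf
  refine h𝒳.mem_of_mem_syzPreimage_right hses hX ?_
  refine h𝒳.syzPreimage.mem_of_le_smulFactorIdeal (I := maximalIdeal S) (fun N _ _ _ hN =>
    h𝒳.syzPreimage.mem_of_pow_le_annihilator hk (n := 1) (by rwa [pow_one])) fun x hx => ?_
  -- Multiplication by `x` on `X / k` factors through `X`, since `x` annihilates `k`.
  have hker : LinearMap.range f ≤ LinearMap.ker (x • (LinearMap.id : X →ₗ[S] X)) := by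
    rintro _ ⟨y, rfl⟩
    rw [LinearMap.mem_ker, LinearMap.smul_apply, LinearMap.id_apply, ← map_smul,
      Module.mem_annihilator.1 (maximalIdeal_le_annihilator_residueField hx), map_zero]
  refine SMulFactors.of_mem (h𝒳.subset_syzPreimage hX) ((LinearMap.range f).liftQ _ hker)
    (LinearMap.range f).mkQ fun m => ?_
  obtain ⟨m, rfl⟩ := Submodule.mkQ_surjective _ m
  rfl

lemma IsResolving.mem_residueField_of_depth (h𝒳 : IsResolving S 𝒳) (hX : Mem 𝒳 X) {t : ℕ}
    (ht : DepthGE S t X) (ht' : ¬ DepthGE S (t + 1) X) {n : ℕ}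
    (hk : Mem (syzPreimage^[n] 𝒳) (ResidueField S)) :
    Mem (syzPreimage^[t] 𝒳) (ResidueField S) := by
  obtain ⟨rs, rfl, hrs, hreg⟩ := le_depthE_iff.1 ht
  obtain ⟨Y, hY, hdepth⟩ := h𝒳.exists_mem_not_depthGE_one hX hrs hreg ht'
  induction n with
  | zero => exact h𝒳.monotone_iterate_syzPreimage (Nat.zero_le _) hk
  | succ n ih =>
    obtain hn | hn := Nat.lt_or_ge n rs.length
    · exact h𝒳.monotone_iterate_syzPreimage hn hk
    · rw [Function.iterate_succ_apply'] at hk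
      exact ih ((h𝒳.iterate_syzPreimage n).mem_residueField_of_mem_syzPreimage
        (h𝒳.monotone_iterate_syzPreimage hn hY) hdepth hk)

end LocalResolving

section LocalizedClass

variable {R} {p : PrimeSpectrum R} {𝒳 : Set (ModuleCat.{u} R)}

/-- `add 𝒳_p` for a class `𝒳` closed under finite direct sums: the retracts of the modules `X_p`
with `X ∈ 𝒳`. -/
def localizeAt (𝒳 : Set (ModuleCat.{u} R)) (p : PrimeSpectrum R) :
    Set (ModuleCat.{u} (RingAt p)) :=
  {N | ∃ X ∈ 𝒳, ∃ (b : N →ₗ[RingAt p] ModuleAt X p) (a : ModuleAt X p →ₗ[RingAt p] N),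
    ∀ n, a (b n) = n}

section Retract

variable {M N N' : Type u} [AddCommGroup M] [Module R M]
  [AddCommGroup N] [Module (RingAt p) N] [AddCommGroup N'] [Module (RingAt p) N']

lemma mem_localizeAt (p : PrimeSpectrum R) (hM : Mem 𝒳 M) :
    Mem (localizeAt 𝒳 p) (ModuleAt M p) :=
  ⟨ModuleCat.of R M, hM, LinearMap.id, LinearMap.id, fun _ => rfl⟩

lemma mem_localizeAt_of_retract (hN' : Mem (localizeAt 𝒳 p) N') (b : N →ₗ[RingAt p] N')
    (a : N' →ₗ[RingAt p] N) (hab : ∀ n, a (b n) = n) : Mem (localizeAt 𝒳 p) N := by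
  obtain ⟨X, hX, d, c, hcd⟩ := hN'
  refine ⟨X, hX, d ∘ₗ b, a ∘ₗ c, fun n => ?_⟩
  exact (congrArg a (hcd (b n))).trans (hab n)

lemma mem_localizeAt_of_linearEquiv (e : N' ≃ₗ[RingAt p] N) (hN' : Mem (localizeAt 𝒳 p) N') :
    Mem (localizeAt 𝒳 p) N :=
  mem_localizeAt_of_retract hN' e.symm.toLinearMap e.toLinearMap e.apply_symm_apply

namespace SMulFactors

lemma moduleAt {s : R} (h : SMulFactors 𝒳 M s) (p : PrimeSpectrum R) :
    SMulFactors (localizeAt 𝒳 p) (ModuleAt M p) (algebraMap R (RingAt p) s) := by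
  obtain ⟨X, b, a, hX, hab⟩ := h
  exact of_mem (mem_localizeAt (M := X) p hX) (mapAt p b) (mapAt p a) (mapAt_mapAt_eq_smul hab)

lemma mem_localizeAt {s : R} (h : SMulFactors 𝒳 M s) (hs : s ∉ p.asIdeal) :
    Mem (localizeAt 𝒳 p) (ModuleAt M p) := by
  obtain ⟨X, b, a, hX, hab⟩ := h
  obtain ⟨a', ha'⟩ := exists_leftInverse_mapAt hs hab
  exact mem_localizeAt_of_retract (ResolvPaper.mem_localizeAt (M := X) p hX) (mapAt p b) a' ha'

end SMulFactors

end Retract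

section Lattice

variable {N : Type u} [AddCommGroup N] [Module (RingAt p) N] [Module R N]
  [IsScalarTower R (RingAt p) N]

lemma isLocalizedModule_subtype (N₀ : Submodule R N) (h : ∀ n : N, ∃ s ∉ p.asIdeal, s • n ∈ N₀) :
    IsLocalizedModule p.asIdeal.primeCompl N₀.subtype where
  map_units := (isLocalizedModule_id p.asIdeal.primeCompl N (RingAt p)).map_units
  surj n := by
    obtain ⟨s, hs, hn⟩ := h n
    exact ⟨⟨⟨s • n, hn⟩, ⟨s, hs⟩⟩, rfl⟩
  exists_of_eq hxy := ⟨1, by rw [Subtype.val_injective hxy]⟩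

lemma nonempty_linearEquiv_of_forall_exists_smul_mem (N₀ : Submodule R N)
    (h : ∀ n : N, ∃ s ∉ p.asIdeal, s • n ∈ N₀) : Nonempty (ModuleAt N₀ p ≃ₗ[RingAt p] N) := by
  have := isLocalizedModule_subtype N₀ h
  exact ⟨(IsLocalizedModule.iso p.asIdeal.primeCompl N₀.subtype).extendScalarsOfIsLocalization
    p.asIdeal.primeCompl (RingAt p)⟩

variable (p N) in
lemma exists_fg_forall_exists_smul_mem [Module.Finite (RingAt p) N] :
    ∃ N₀ : Submodule R N, N₀.FG ∧ ∀ n : N, ∃ s ∉ p.asIdeal, s • n ∈ N₀ := by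
  have := isLocalizedModule_id p.asIdeal.primeCompl N (RingAt p)
  obtain ⟨t, ht⟩ := Module.Finite.fg_top (R := RingAt p) (M := N)
  refine ⟨Submodule.span R t, ⟨t, rfl⟩, fun n => ?_⟩
  have hn : n ∈ (Submodule.span R (t : Set N)).localized' (RingAt p) p.asIdeal.primeCompl
      LinearMap.id := by
    simp [Submodule.localized'_span, ht]
  obtain ⟨m, hm, s, rfl⟩ := (Submodule.mem_localized' ..).1 hn
  refine ⟨s, s.2, ?_⟩
  have hsm : s • IsLocalizedModule.mk' (LinearMap.id : N →ₗ[R] N) m s = m :=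
    IsLocalizedModule.mk'_cancel' ..
  exact Set.mem_of_eq_of_mem hsm hm

end Lattice

variable (p) in
lemma exists_finite_linearEquiv_moduleAt (N : Type u) [AddCommGroup N] [Module (RingAt p) N]
    [Module.Finite (RingAt p) N] :
    ∃ M : ModuleCat.{u} R, Module.Finite R M ∧ Nonempty (ModuleAt M p ≃ₗ[RingAt p] N) := by
  let _ := Module.compHom N (algebraMap R (RingAt p))
  have : IsScalarTower R (RingAt p) N := IsScalarTower.of_algebraMap_smul fun _ _ => rfl
  obtain ⟨N₀, hfg, hN₀⟩ := exists_fg_forall_exists_smul_mem p N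
  exact ⟨ModuleCat.of R N₀, Module.Finite.iff_fg.2 hfg,
    nonempty_linearEquiv_of_forall_exists_smul_mem N₀ hN₀⟩

variable (p) in
lemma exists_isSES_of_isSES_moduleAt [IsNoetherianRing R] {A B C : Type u}
    [AddCommGroup A] [Module (RingAt p) A] [AddCommGroup B] [Module (RingAt p) B]
    [AddCommGroup C] [Module (RingAt p) C] [Module.Finite (RingAt p) B]
    {f : A →ₗ[RingAt p] B} {g : B →ₗ[RingAt p] C} (h : IsSES f g) :
    ∃ (A₀ B₀ C₀ : ModuleCat.{u} R) (i : A₀ →ₗ[R] B₀) (j : B₀ →ₗ[R] C₀), IsSES i j ∧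
      Module.Finite R B₀ ∧ Nonempty (ModuleAt A₀ p ≃ₗ[RingAt p] A) ∧
      Nonempty (ModuleAt B₀ p ≃ₗ[RingAt p] B) ∧ Nonempty (ModuleAt C₀ p ≃ₗ[RingAt p] C) := by
  let _ := Module.compHom A (algebraMap R (RingAt p))
  let _ := Module.compHom B (algebraMap R (RingAt p))
  let _ := Module.compHom C (algebraMap R (RingAt p))
  have : IsScalarTower R (RingAt p) A := IsScalarTower.of_algebraMap_smul fun _ _ => rfl
  have : IsScalarTower R (RingAt p) B := IsScalarTower.of_algebraMap_smul fun _ _ => rfl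
  have : IsScalarTower R (RingAt p) C := IsScalarTower.of_algebraMap_smul fun _ _ => rfl
  obtain ⟨B₀, hfg, hB₀⟩ := exists_fg_forall_exists_smul_mem p B
  let f' := f.restrictScalars R
  let g' := g.restrictScalars R
  refine ⟨ModuleCat.of R (B₀.comap f'), ModuleCat.of R B₀, ModuleCat.of R (B₀.map g'),
    f'.restrict fun _ ha => ha, g'.restrict fun _ => Submodule.mem_map_of_mem,
    IsSES.of_forall (fun a ha => ?_) ?_ (fun a => Subtype.ext (h.apply_apply a.1)) (fun b hb => ?_),
    Module.Finite.iff_fg.2 hfg, nonempty_linearEquiv_of_forall_exists_smul_mem _ fun a => ?_,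
    nonempty_linearEquiv_of_forall_exists_smul_mem _ hB₀,
    nonempty_linearEquiv_of_forall_exists_smul_mem _ fun c => ?_⟩
  · exact Subtype.ext ((injective_iff_map_eq_zero f).1 h.1 _ (congrArg Subtype.val ha))
  · rintro ⟨_, b, hb, rfl⟩
    exact ⟨⟨b, hb⟩, rfl⟩
  · obtain ⟨a, ha⟩ := h.exists_apply_eq (congrArg Subtype.val hb)
    exact ⟨⟨a, show f a ∈ B₀ from ha ▸ b.2⟩, Subtype.ext ha⟩
  · obtain ⟨s, hs, hsa⟩ := hB₀ (f' a)
    exact ⟨s, hs, by rwa [Submodule.mem_comap, map_smul]⟩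
  · obtain ⟨b, rfl⟩ := h.2.1 c
    obtain ⟨s, hs, hsb⟩ := hB₀ b
    exact ⟨s, hs, s • b, hsb, map_smul g' s b⟩

namespace IsResolving

variable {A B C K N P : Type u} [AddCommGroup A] [Module (RingAt p) A]
  [AddCommGroup B] [Module (RingAt p) B] [AddCommGroup C] [Module (RingAt p) C]
  [AddCommGroup K] [Module (RingAt p) K] [AddCommGroup N] [Module (RingAt p) N]
  [AddCommGroup P] [Module (RingAt p) P]

lemma finite_of_mem_localizeAt (h𝒳 : IsResolving R 𝒳) (hN : Mem (localizeAt 𝒳 p) N) :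
    Module.Finite (RingAt p) N := by
  obtain ⟨X, hX, b, a, hab⟩ := hN
  have : Module.Finite R X := h𝒳.fg X hX
  exact Module.Finite.of_surjective a fun n => ⟨b n, hab n⟩

lemma mem_localizeAt_of_projective (h𝒳 : IsResolving R 𝒳) [Module.Finite (RingAt p) P]
    [Module.Projective (RingAt p) P] : Mem (localizeAt 𝒳 p) P := by
  obtain ⟨M, _, ⟨e⟩⟩ := exists_finite_linearEquiv_moduleAt p P
  obtain ⟨F, π, _, _, hπ⟩ := exists_finite_projective_surjective (S := R) M
  obtain ⟨σ, hσ⟩ := Module.projective_lifting_property (mapAt p π) e.symm.toLinearMap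
    (LocalizedModule.map_surjective _ π hπ)
  refine mem_localizeAt_of_retract (mem_localizeAt p (h𝒳.mem_of_projective F)) σ
    (e.toLinearMap ∘ₗ mapAt p π) fun x => ?_
  exact (congrArg e (LinearMap.congr_fun hσ x)).trans (e.apply_symm_apply x)

variable [IsNoetherianRing R]

lemma exists_smulFactors_of_mem_localizeAt (h𝒳 : IsResolving R 𝒳) {M : Type u} [AddCommGroup M]
    [Module R M] [Module.Finite R M] (h : Mem (localizeAt 𝒳 p) (ModuleAt M p)) :
    ∃ s ∉ p.asIdeal, SMulFactors 𝒳 M s := by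
  obtain ⟨X, hX, b, a, hab⟩ := h
  have : Module.Finite R X := h𝒳.fg X hX
  have := Module.finitePresentation_of_finite R M
  have := Module.finitePresentation_of_finite R X
  let ιM := LocalizedModule.mkLinearMap p.asIdeal.primeCompl M
  let ιX := LocalizedModule.mkLinearMap p.asIdeal.primeCompl X
  obtain ⟨b₀, s, hb⟩ := Module.FinitePresentation.exists_lift_of_isLocalizedModule
    p.asIdeal.primeCompl ιX (b.restrictScalars R ∘ₗ ιM)
  obtain ⟨a₀, t, ha⟩ := Module.FinitePresentation.exists_lift_of_isLocalizedModule
    p.asIdeal.primeCompl ιM (a.restrictScalars R ∘ₗ ιX)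
  have hcomp : ιM ∘ₗ a₀ ∘ₗ b₀ = ιM ∘ₗ ((t * s) • LinearMap.id) := by
    ext m
    calc ιM (a₀ (b₀ m)) = t • a (ιX (b₀ m)) := LinearMap.congr_fun ha (b₀ m)
      _ = t • a (s • b (ιM m)) := congrArg (t • a ·) (LinearMap.congr_fun hb m)
      _ = t • s • a (b (ιM m)) :=
        congrArg (t • ·) (LinearMap.map_smul_of_tower (R := R) a (s : R) _)
      _ = t • s • ιM m := congrArg (t • s • ·) (hab _)
      _ = ιM ((t * s) • m) := by rw [smul_smul]; exact (map_smul ιM ((t * s : _) : R) m).symm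
  obtain ⟨r, hr⟩ := Module.Finite.exists_smul_of_comp_eq_of_isLocalizedModule
    p.asIdeal.primeCompl ιM _ _ hcomp
  refine ⟨(r * (t * s) : p.asIdeal.primeCompl), (r * (t * s)).2,
    X, b₀, (r : R) • a₀, hX, fun m => ?_⟩
  exact (LinearMap.congr_fun hr m).trans (smul_smul (r : R) _ m)

/-- The factorization ideal of `M` is contained in no maximal ideal. -/
lemma mem_of_forall_mem_localizeAt (h𝒳 : IsResolving R 𝒳) {M : Type u} [AddCommGroup M]
    [Module R M] [Module.Finite R M]
    (h : ∀ p : PrimeSpectrum R, Mem (localizeAt 𝒳 p) (ModuleAt M p)) : Mem 𝒳 M := by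
  refine mem_of_smulFactorIdeal_eq_top h𝒳 (by_contra fun hne => ?_)
  obtain ⟨m, hm, hle⟩ := Ideal.exists_le_maximal _ hne
  obtain ⟨s, hs, hfac⟩ := h𝒳.exists_smulFactors_of_mem_localizeAt (h ⟨m, hm.isPrime⟩)
  exact hs (hle ((mem_smulFactorIdeal h𝒳).2 hfac))

lemma mem_localizeAt_of_extension (h𝒳 : IsResolving R 𝒳) {f : A →ₗ[RingAt p] B}
    {g : B →ₗ[RingAt p] C} (h : IsSES f g) (hA : Mem (localizeAt 𝒳 p) A)
    (hC : Mem (localizeAt 𝒳 p) C) : Mem (localizeAt 𝒳 p) B := by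
  have := h𝒳.finite_of_mem_localizeAt hA
  have := h𝒳.finite_of_mem_localizeAt hC
  have := Module.Finite.of_exact h.exact h.2.1
  obtain ⟨A₀, B₀, C₀, i, j, hij, _, ⟨eA⟩, ⟨eB⟩, ⟨eC⟩⟩ := exists_isSES_of_isSES_moduleAt p h
  have := Module.Finite.of_injective i hij.1
  have := Module.Finite.of_surjective j hij.2.1
  obtain ⟨s, hs, hsA⟩ := h𝒳.exists_smulFactors_of_mem_localizeAt (M := A₀)
    (mem_localizeAt_of_linearEquiv eA.symm hA)
  obtain ⟨t, ht, htC⟩ := h𝒳.exists_smulFactors_of_mem_localizeAt (M := C₀)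
    (mem_localizeAt_of_linearEquiv eC.symm hC)
  exact mem_localizeAt_of_linearEquiv eB
    ((SMulFactors.of_extension h𝒳 hij hsA htC).mem_localizeAt (p.2.mul_notMem hs ht))

/-- Schanuel's lemma compares `K` with the localization of a syzygy over `R`. -/
lemma mem_localizeAt_of_syzygy (h𝒳 : IsResolving R 𝒳) [Module.Finite (RingAt p) P]
    [Module.Projective (RingAt p) P] {f : K →ₗ[RingAt p] P} {g : P →ₗ[RingAt p] N}
    (h : IsSES f g) (hN : Mem (localizeAt 𝒳 p) N) : Mem (localizeAt 𝒳 p) K := by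
  have := h𝒳.finite_of_mem_localizeAt hN
  obtain ⟨M, _, ⟨e⟩⟩ := exists_finite_linearEquiv_moduleAt p N
  obtain ⟨s, hs, hsM⟩ := h𝒳.exists_smulFactors_of_mem_localizeAt (M := M)
    (mem_localizeAt_of_linearEquiv e.symm hN)
  obtain ⟨F, π, _, _, hπ⟩ := exists_finite_projective_surjective (S := R) M
  have hL := (SMulFactors.of_syzygy h𝒳 (isSES_ker_subtype hπ) hsM).mem_localizeAt hs
  let π' : ModuleAt F p →ₗ[RingAt p] N := e.toLinearMap ∘ₗ mapAt p π
  have hπ' : IsSES (mapAt p (LinearMap.ker π).subtype) π' := by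
    have hses := (isSES_ker_subtype hπ).mapAt (p := p)
    exact ⟨hses.1, e.surjective.comp hses.2.1, by rw [hses.2.2, LinearEquiv.ker_comp]⟩
  obtain ⟨i, hi⟩ := fiberProduct.exists_isSES_fst g hπ'
  obtain ⟨j, -, hj⟩ := fiberProduct.exists_isSES_snd π' h
  have hQ := h𝒳.mem_localizeAt_of_extension hi hL h𝒳.mem_localizeAt_of_projective
  have : Module.Projective (RingAt p) (ModuleAt F p) :=
    Module.projective_of_isLocalizedModule p.asIdeal.primeCompl
      (LocalizedModule.mkLinearMap p.asIdeal.primeCompl F)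
  obtain ⟨σ, hσ⟩ := Module.projective_lifting_property _ LinearMap.id hj.2.1
  have φ := (hj.exact.splitSurjectiveEquiv hj.1 ⟨σ, hσ⟩).1
  exact mem_localizeAt_of_retract hQ (φ.symm.toLinearMap ∘ₗ LinearMap.inl ..)
    (LinearMap.fst .. ∘ₗ φ.toLinearMap) fun k => by simp

protected lemma localizeAt (h𝒳 : IsResolving R 𝒳) (p : PrimeSpectrum R) :
    IsResolving (RingAt p) (localizeAt 𝒳 p) where
  fg M h := h𝒳.finite_of_mem_localizeAt (N := M) h
  iso_closed := fun M N ⟨e⟩ h => mem_localizeAt_of_linearEquiv (N' := M) (N := N) e h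
  proj_mem M _ _ := h𝒳.mem_localizeAt_of_projective (P := M)
  summand_closed M N h := mem_localizeAt_of_retract (N := M) h (LinearMap.inl (RingAt p) M N)
    (LinearMap.fst (RingAt p) M N) fun _ => rfl
  ext_closed A B C _ _ h := h𝒳.mem_localizeAt_of_extension (A := A) (B := B) (C := C) h
  syzygy_closed K P M _ _ h _ _ _ := h𝒳.mem_localizeAt_of_syzygy (K := K) (P := P) (N := M) h

end IsResolving

section Dominance

lemma IsResolving.mem_pi {S : Type u} [CommRing S] {𝒴 : Set (ModuleCat.{u} S)}
    (h𝒴 : IsResolving S 𝒴) {n : ℕ} {X : Fin n → Type u} [∀ i, AddCommGroup (X i)]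
    [∀ i, Module S (X i)] (h : ∀ i, Mem 𝒴 (X i)) : Mem 𝒴 (∀ i, X i) := by
  induction n with
  | zero => exact h𝒴.mem_of_projective _
  | succ n ih =>
    exact h𝒴.mem_of_linearEquiv (Fin.consLinearEquiv S X) (h𝒴.mem_prod (h 0) (ih fun i => h i.succ))

lemma memAddLocal_iff_mem_localizeAt [IsNoetherianRing R] (h𝒳 : IsResolving R 𝒳)
    {N : ModuleCat.{u} (RingAt p)} : memAddLocal R 𝒳 p N ↔ N ∈ localizeAt 𝒳 p := by
  constructor
  · rintro ⟨n, X, hX, N', ⟨e⟩⟩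
    have hpi := (h𝒳.localizeAt p).mem_pi fun i => mem_localizeAt (M := X i) p (hX i)
    exact (h𝒳.localizeAt p).summand_closed N N' (mem_localizeAt_of_linearEquiv e.symm hpi)
  · rintro ⟨X, hX, b, a, hab⟩
    have ha : Function.Surjective a := fun n => ⟨b n, hab n⟩
    have e := ((isSES_ker_subtype ha).exact.splitSurjectiveEquiv Subtype.val_injective
      ⟨b, LinearMap.ext hab⟩).1
    exact ⟨1, fun _ => X, fun _ => hX, ModuleCat.of _ (LinearMap.ker a),
      ⟨((LinearEquiv.prodComm ..).trans e.symm).trans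
        (LinearEquiv.funUnique (Fin 1) (RingAt p) (ModuleAt X p)).symm⟩⟩

lemma IsResolving.mem_iff_of_isMinSyz {S : Type u} [CommRing S] [IsLocalRing S]
    [IsNoetherianRing S] {𝒴 : Set (ModuleCat.{u} S)} (h𝒴 : IsResolving S 𝒴) {n : ℕ}
    {M K : ModuleCat.{u} S} (h : IsMinSyz S n M K) : K ∈ 𝒴 ↔ M ∈ syzPreimage^[n] 𝒴 := by
  induction n generalizing M with
  | zero =>
    obtain ⟨e⟩ := h
    exact ⟨h𝒴.iso_closed _ _ ⟨e⟩, h𝒴.iso_closed _ _ ⟨e.symm⟩⟩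
  | succ n ih =>
    obtain ⟨F, g, K', i, _, _, hg, -, hi, hker, hK'⟩ := h
    have hses : IsSES i g := ⟨hi, hg, hker⟩
    rw [ih hK', Function.iterate_succ_apply']
    exact ⟨(h𝒴.iterate_syzPreimage n).mem_syzPreimage_of_isSES (K := K') (M := M) hses,
      (h𝒴.iterate_syzPreimage n).mem_of_mem_syzPreimage (K := K') (M := M) hses⟩

end Dominance

end LocalizedClass

section GlobalDepth

open RingTheory.Sequence
open scoped Pointwise

variable {R} {M : Type u} [AddCommGroup M] [Module R M]

lemma localDepthGE_of_isWeaklyRegular {p : PrimeSpectrum R} {rs : List R}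
    (hmem : ∀ r ∈ rs, r ∈ p.asIdeal) (hreg : IsWeaklyRegular M rs) :
    LocalDepthGE p rs.length M :=
  le_depthE_iff.2 ⟨rs.map (algebraMap R (RingAt p)), List.length_map _,
    List.forall_mem_map.2 fun r hr => algebraMap_mem_maximalIdeal (hmem r hr),
    hreg.of_isLocalizedModule (RingAt p) p.asIdeal.primeCompl
      (LocalizedModule.mkLinearMap p.asIdeal.primeCompl M)⟩

variable [IsNoetherianRing R]

lemma LocalDepthGE.notMem_associatedPrimes {q : PrimeSpectrum R} (hq : LocalDepthGE q 1 M) :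
    q.asIdeal ∉ associatedPrimes R M := by
  intro hass
  obtain ⟨rs, hlen, hmem, hreg⟩ := le_depthE_iff.1 hq
  obtain ⟨x, rfl⟩ := List.length_eq_one_iff.1 hlen
  have hx : x ∈ ⋃ P ∈ associatedPrimes (RingAt q) (ModuleAt M q), (P : Set (RingAt q)) :=
    Set.mem_biUnion
      (Module.associatedPrimes.mem_associatedPrimes_atPrime_of_mem_associatedPrimes hass)
      (hmem x List.mem_cons_self)
  rw [biUnion_associatedPrimes_eq_compl_regular] at hx
  exact hx ((isWeaklyRegular_cons_iff _ _ _).1 hreg).1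

open Module.associatedPrimes in
lemma LocalDepthGE.of_notMem_associatedPrimes [Module.Finite R M] {q : PrimeSpectrum R}
    (hq : q.asIdeal ∉ associatedPrimes R M) : LocalDepthGE q 1 M := by
  contrapose! hq
  have hmax : IsLocalRing.maximalIdeal (RingAt q) ∈ associatedPrimes (RingAt q) (ModuleAt M q) :=
    (isAssociatedPrime_iff_exists_injective_linearMap _ _).2
      ⟨inferInstance, exists_injective_of_not_depthGE_one hq⟩
  have hcomap :=
    comap_mem_associatedPrimes_of_mem_associatedPrimes_of_isLocalizedModule_of_fg
      q.asIdeal.primeCompl (LocalizedModule.mkLinearMap q.asIdeal.primeCompl M) _ hmax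
      (IsNoetherian.noetherian _)
  have hq : (IsLocalRing.maximalIdeal (RingAt q)).comap (algebraMap R (RingAt q)) = q.asIdeal :=
    Localization.AtPrime.under_maximalIdeal
  rwa [hq] at hcomap

lemma localDepthGE_quotSMulTop_iff [Module.Finite R M] {p : PrimeSpectrum R} {x : R}
    (hxp : x ∈ p.asIdeal) (hx : IsSMulRegular M x) {n : ℕ} :
    LocalDepthGE p n (QuotSMulTop x M) ↔ LocalDepthGE p (n + 1) M :=
  ⟨.left_of_mem_smul (isSES_smul_mkQ hx) (Submodule.smul_mem_smul hxp trivial),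
    fun h => .right (isSES_smul_mkQ hx) (h.mono n.le_succ) h⟩

lemma localDepthGE_quotient_ofList_iff {M : Type u} [AddCommGroup M] [Module R M]
    [Module.Finite R M] {p : PrimeSpectrum R} {rs : List R} (hmem : ∀ r ∈ rs, r ∈ p.asIdeal)
    (hreg : IsWeaklyRegular M rs) {n : ℕ} :
    LocalDepthGE p n (M ⧸ (Ideal.ofList rs • ⊤ : Submodule R M)) ↔
      LocalDepthGE p (n + rs.length) M := by
  induction rs generalizing M with
  | nil =>
    have e : (M ⧸ (Ideal.ofList ([] : List R) • ⊤ : Submodule R M)) ≃ₗ[R] M :=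
      Submodule.quotEquivOfEqBot (Ideal.ofList ([] : List R) • (⊤ : Submodule R M))
        (by rw [Ideal.ofList_nil, Submodule.bot_smul])
    exact ⟨.of_linearEquiv e.symm, .of_linearEquiv e⟩
  | cons r rs ih =>
    obtain ⟨hr, hrs⟩ := List.forall_mem_cons.1 hmem
    obtain ⟨hreg_r, hreg_rs⟩ := (isWeaklyRegular_cons_iff M r rs).1 hreg
    have e := Submodule.quotOfListConsSMulTopEquivQuotSMulTopInner M r rs
    rw [List.length_cons, ← add_assoc, ← localDepthGE_quotSMulTop_iff hr hreg_r, ← ih hrs hreg_rs]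
    exact ⟨.of_linearEquiv e.symm, .of_linearEquiv e⟩

lemma exists_mem_isSMulRegular_of_localDepthGE_one [Module.Finite R M] {I : Ideal R}
    (h : ∀ q : PrimeSpectrum R, I ≤ q.asIdeal → LocalDepthGE q 1 M) :
    ∃ x ∈ I, IsSMulRegular M x := by
  by_contra! hI
  have hcover : (I : Set R) ⊆ ⋃ P ∈ associatedPrimes R M, (P : Set R) := by
    rw [biUnion_associatedPrimes_eq_compl_regular]
    exact hI
  obtain ⟨P, hP, hle⟩ := (Ideal.subset_union_prime_finite (associatedPrimes.finite R M)
    (f := id) ⊤ ⊤ fun _ hP _ _ => IsAssociatedPrime.isPrime hP).1 hcover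
  exact (h ⟨P, IsAssociatedPrime.isPrime hP⟩ hle).notMem_associatedPrimes hP

lemma exists_isWeaklyRegular_of_localDepthGE {I : Ideal R} {n : ℕ} {M : Type u} [AddCommGroup M]
    [Module R M] [Module.Finite R M]
    (h : ∀ q : PrimeSpectrum R, I ≤ q.asIdeal → LocalDepthGE q n M) :
    ∃ rs : List R, rs.length = n ∧ (∀ r ∈ rs, r ∈ I) ∧ IsWeaklyRegular M rs := by
  induction n generalizing M with
  | zero => exact ⟨[], rfl, by simp, .nil R M⟩
  | succ n ih =>
    obtain ⟨x, hxI, hx⟩ := exists_mem_isSMulRegular_of_localDepthGE_one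
      fun q hq => (h q hq).mono (Nat.le_add_left 1 n)
    obtain ⟨rs, hlen, hmem, hreg⟩ := ih (M := QuotSMulTop x M) fun q hq =>
      (localDepthGE_quotSMulTop_iff (hq hxI) hx).2 (h q hq)
    exact ⟨x :: rs, congrArg (· + 1) hlen, List.forall_mem_cons.2 ⟨hxI, hmem⟩,
      (isWeaklyRegular_cons_iff M x rs).2 ⟨hx, hreg⟩⟩

lemma le_depthE_iff_forall_localDepthGE [Module.Finite R M] {I : Ideal R} {n : ℕ} :
    (n : ℕ∞) ≤ depthE R I M ↔ ∀ q : PrimeSpectrum R, I ≤ q.asIdeal → LocalDepthGE q n M := by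
  refine le_depthE_iff.trans ⟨?_, exists_isWeaklyRegular_of_localDepthGE⟩
  rintro ⟨rs, rfl, hmem, hreg⟩ q hq
  exact localDepthGE_of_isWeaklyRegular (fun r hr => hq (hmem r hr)) hreg

lemma le_gradeE_iff (hCM : ∀ p : PrimeSpectrum R, IsCMLocalRing (RingAt p))
    {p : PrimeSpectrum R} {n : ℕ} : (n : ℕ∞) ≤ gradeE R p.asIdeal ↔ n ≤ natHeight p := by
  simp only [gradeE, le_depthE_iff_forall_localDepthGE, localDepthGE_self_iff (hCM _)]
  exact ⟨fun h => h p le_rfl, fun h q hq => h.trans (natHeight_strictMono.monotone hq)⟩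

lemma mem_psiDepth_iff {f : PrimeSpectrum R → ℕ} {M : ModuleCat.{u} R} :
    M ∈ psiDepth R f ↔ Module.Finite R M ∧ ∀ p, CodepthLE p (f p) M := by
  refine and_congr Iff.rfl (forall_congr' fun p => ?_)
  rw [← coe_natHeight, ← ENat.natCast_sub]
  rfl

end GlobalDepth

section DominantToFunction

variable {R} {𝒳 : Set (ModuleCat.{u} R)}

/-- `d` is the least depth of `X_p` for `X` in `𝒳`. -/
structure IsLeastDepth (𝒳 : Set (ModuleCat.{u} R)) (p : PrimeSpectrum R) (d : ℕ) : Prop where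
  le_localDepth : ∀ X ∈ 𝒳, LocalDepthGE p d X
  exists_not : ∃ X ∈ 𝒳, ¬ LocalDepthGE p (d + 1) X

lemma IsLeastDepth.iInf_eq {p : PrimeSpectrum R} {d : ℕ} (h : IsLeastDepth 𝒳 p d) :
    ⨅ X ∈ 𝒳, localDepth R p X = d := by
  obtain ⟨X, hX, hnot⟩ := h.exists_not
  refine le_antisymm (iInf₂_le_of_le X hX ?_) (le_iInf₂ h.le_localDepth)
  have hlt : localDepth R p X < (d + 1 : ℕ) := not_le.1 hnot
  exact Order.le_of_lt_add_one hlt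

variable [IsNoetherianRing R]

lemma IsResolving.exists_isLeastDepth (hCM : ∀ p : PrimeSpectrum R, IsCMLocalRing (RingAt p))
    (h𝒳 : IsResolving R 𝒳) (p : PrimeSpectrum R) :
    ∃ d ≤ natHeight p, IsLeastDepth 𝒳 p d := by
  classical
  have hR : ¬ LocalDepthGE p (natHeight p + 1) R := fun h =>
    (Nat.lt_succ_self _).not_ge ((localDepthGE_self_iff (hCM p)).1 h)
  have hex : ∃ d, ∃ X ∈ 𝒳, ¬ LocalDepthGE p (d + 1) X :=
    ⟨_, ModuleCat.of R R, h𝒳.mem_of_projective R, hR⟩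
  refine ⟨Nat.find hex, Nat.find_le ⟨_, h𝒳.mem_of_projective R, hR⟩, ?_, Nat.find_spec hex⟩
  intro X hX
  cases hd : Nat.find hex with
  | zero => exact .zero
  | succ d =>
    by_contra hlt
    exact Nat.find_min hex (hd ▸ d.lt_succ_self) ⟨X, hX, hlt⟩

lemma IsLeastDepth.mem_syzPreimage_residueField (h𝒳 : IsResolving R 𝒳)
    (hdom : Dominant R 𝒳) {p : PrimeSpectrum R} {d : ℕ} (hd : IsLeastDepth 𝒳 p d) :
    Mem (syzPreimage^[d] (localizeAt 𝒳 p))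
      (IsLocalRing.ResidueField (RingAt p)) := by
  obtain ⟨X, hX, hnot⟩ := hd.exists_not
  obtain ⟨n, K, hK, hK𝒳⟩ := hdom p trivial
  have h𝒳p := h𝒳.localizeAt p
  exact h𝒳p.mem_residueField_of_depth (mem_localizeAt p (M := X) hX) (hd.le_localDepth X hX) hnot
    ((h𝒳p.mem_iff_of_isMinSyz hK).1 ((memAddLocal_iff_mem_localizeAt h𝒳).1 hK𝒳))

lemma IsResolving.maximalIdeal_le_radical_smulFactorIdeal (h𝒳 : IsResolving R 𝒳)
    {p : PrimeSpectrum R} {M : Type u} [AddCommGroup M] [Module R M] [Module.Finite R M]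
    (hM : ∀ q < p, Mem (localizeAt 𝒳 q) (ModuleAt M q)) :
    IsLocalRing.maximalIdeal (RingAt p) ≤
      (smulFactorIdeal (h𝒳.localizeAt p) (ModuleAt M p)).radical := by
  rw [Ideal.radical_eq_sInf]
  refine le_sInf ?_
  rintro Q ⟨hQ, hQprime⟩
  let q : PrimeSpectrum R := PrimeSpectrum.comap (algebraMap R (RingAt p)) ⟨Q, hQprime⟩
  have hqp : q ≤ p := (Ideal.comap_mono (IsLocalRing.le_maximalIdeal hQprime.ne_top)).trans
    (Localization.AtPrime.under_maximalIdeal (I := p.asIdeal)).le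
  obtain heq | hlt := hqp.eq_or_lt
  · rw [← Localization.AtPrime.map_eq_maximalIdeal, Ideal.map_le_iff_le_comap]
    exact (congrArg PrimeSpectrum.asIdeal heq).ge
  · obtain ⟨s, hs, hfactors⟩ := h𝒳.exists_smulFactors_of_mem_localizeAt (hM q hlt)
    exact absurd (hQ (hfactors.moduleAt p)) hs

lemma IsResolving.mem_localizeAt_of_forall_isLeastDepth (h𝒳 : IsResolving R 𝒳)
    (hdom : Dominant R 𝒳) {d : PrimeSpectrum R → ℕ} (hd : ∀ p, IsLeastDepth 𝒳 p (d p))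
    {M : Type u} [AddCommGroup M] [Module R M] [Module.Finite R M]
    (hM : ∀ p, LocalDepthGE p (d p) M) (p : PrimeSpectrum R) :
    Mem (localizeAt 𝒳 p) (ModuleAt M p) := by
  induction hn : natHeight p using Nat.strong_induction_on generalizing p with
  | _ n ih =>
    have hrad := h𝒳.maximalIdeal_le_radical_smulFactorIdeal (M := M) (p := p)
      fun q hq => ih _ (hn ▸ natHeight_strictMono hq) q rfl
    obtain ⟨k, hk⟩ := Ideal.exists_pow_le_of_le_radical_of_fg hrad (IsNoetherian.noetherian _)
    exact (h𝒳.localizeAt p).mem_of_pow_le_smulFactorIdeal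
      ((hd p).mem_syzPreimage_residueField h𝒳 hdom) (hM p) hk

lemma gradeConsistent_of_isLeastDepth (hCM : ∀ p : PrimeSpectrum R, IsCMLocalRing (RingAt p))
    (h𝒳 : IsResolving R 𝒳) {d : PrimeSpectrum R → ℕ} (hle : ∀ p, d p ≤ natHeight p)
    (hd : ∀ p, IsLeastDepth 𝒳 p (d p)) : GradeConsistent R fun p => natHeight p - d p := by
  refine ⟨fun p => (le_gradeE_iff hCM).2 (Nat.sub_le _ _), fun p q hpq => ?_⟩
  obtain ⟨X, hX, hnot⟩ := (hd p).exists_not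
  have := h𝒳.finite_of_mem hX
  have hcodepth : CodepthLE q (natHeight q - d q) X := by
    rw [CodepthLE, Nat.sub_sub_self (hle q)]
    exact (hd q).le_localDepth X hX
  by_contra! hlt
  exact hnot ((hcodepth.of_le hpq).mono (by omega))

lemma psiDepth_eq_of_isLeastDepth (h𝒳 : IsResolving R 𝒳) (hdom : Dominant R 𝒳)
    {d : PrimeSpectrum R → ℕ} (hle : ∀ p, d p ≤ natHeight p)
    (hd : ∀ p, IsLeastDepth 𝒳 p (d p)) : psiDepth R (fun p => natHeight p - d p) = 𝒳 := by
  ext M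
  simp only [mem_psiDepth_iff, CodepthLE, Nat.sub_sub_self (hle _)]
  refine ⟨?_, fun hM => ⟨h𝒳.finite_of_mem hM, fun p => (hd p).le_localDepth M hM⟩⟩
  rintro ⟨_, hM⟩
  exact h𝒳.mem_of_forall_mem_localizeAt
    (h𝒳.mem_localizeAt_of_forall_isLeastDepth hdom hd hM)

theorem IsResolving.exists_gradeConsistent_psiDepth_eq
    (hCM : ∀ p : PrimeSpectrum R, IsCMLocalRing (RingAt p)) (h𝒳 : IsResolving R 𝒳)
    (hdom : Dominant R 𝒳) :
    ∃ f : PrimeSpectrum R → ℕ, GradeConsistent R f ∧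
      (∀ p, (f p : ℕ∞) = heightE R p - ⨅ X ∈ 𝒳, localDepth R p X) ∧ psiDepth R f = 𝒳 := by
  choose d hle hd using h𝒳.exists_isLeastDepth hCM
  refine ⟨_, gradeConsistent_of_isLeastDepth hCM h𝒳 hle hd, fun p => ?_,
    psiDepth_eq_of_isLeastDepth h𝒳 hdom hle hd⟩
  rw [(hd p).iInf_eq, ← coe_natHeight, ENat.natCast_sub]

end DominantToFunction

section PsiResolving

variable {R} [IsNoetherianRing R]

lemma LocalDepthGE.of_projective (hCM : ∀ p : PrimeSpectrum R, IsCMLocalRing (RingAt p))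
    (p : PrimeSpectrum R) (M : Type u) [AddCommGroup M] [Module R M] [Module.Finite R M]
    [Module.Projective R M] : LocalDepthGE p (natHeight p) M := by
  obtain ⟨n, g, hg⟩ := Module.Finite.exists_fin' R M
  obtain ⟨b, hb⟩ := Module.projective_lifting_property g LinearMap.id hg
  have hfree : LocalDepthGE p (natHeight p) (Fin n → R) :=
    .pi ((localDepthGE_self_iff (hCM p)).2 le_rfl) n
  exact .retract b g (LinearMap.congr_fun hb) hfree

lemma LocalDepthGE.syzygy {p : PrimeSpectrum R} {n : ℕ} {A B C : Type u} [AddCommGroup A]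
    [Module R A] [AddCommGroup B] [Module R B] [AddCommGroup C] [Module R C] [Module.Finite R A]
    [Module.Finite R B] [Module.Finite R C] {f : A →ₗ[R] B} {g : B →ₗ[R] C} (h : IsSES f g)
    (hB : LocalDepthGE p n B) (hC : LocalDepthGE p (n - 1) C) : LocalDepthGE p n A := by
  cases n with
  | zero => exact .zero
  | succ n => exact .left h hB hC

lemma isResolving_psiDepth (hCM : ∀ p : PrimeSpectrum R, IsCMLocalRing (RingAt p))
    (f : PrimeSpectrum R → ℕ) : IsResolving R (psiDepth R f) where
  fg _ hM := hM.1
  iso_closed M N := by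
    rintro ⟨e⟩ hM
    obtain ⟨_, hdepth⟩ := mem_psiDepth_iff.1 hM
    have := Module.Finite.equiv e
    exact mem_psiDepth_iff.2 ⟨this, fun p => .of_linearEquiv e.symm (hdepth p)⟩
  proj_mem M _ _ := mem_psiDepth_iff.2
    ⟨inferInstance, fun p => .mono (Nat.sub_le _ _) (.of_projective hCM p M)⟩
  summand_closed M N hMN := by
    obtain ⟨(_ : Module.Finite R (M × N)), hdepth⟩ := mem_psiDepth_iff.1 hMN
    have := Module.Finite.of_surjective (LinearMap.fst R M N) LinearMap.fst_surjective
    exact mem_psiDepth_iff.2 ⟨this, fun p =>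
      .retract (X := M × N) (LinearMap.inl R M N) (LinearMap.fst R M N) (fun _ => rfl) (hdepth p)⟩
  ext_closed A B C i g h hA hC := by
    obtain ⟨_, hdepthA⟩ := mem_psiDepth_iff.1 hA
    obtain ⟨_, hdepthC⟩ := mem_psiDepth_iff.1 hC
    have := Module.Finite.of_exact h.exact h.2.1
    exact mem_psiDepth_iff.2 ⟨this, fun p => .middle h (hdepthA p) (hdepthC p)⟩
  syzygy_closed K P M i g h _ _ _ hM := by
    obtain ⟨_, hdepth⟩ := mem_psiDepth_iff.1 hM
    exact mem_psiDepth_iff.2 ⟨inferInstance, fun p => .syzygy h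
      (.mono (Nat.sub_le _ _) (.of_projective hCM p P)) (.mono (Nat.sub_le _ _) (hdepth p))⟩

end PsiResolving

section BoundedCodepth

open RingTheory.Sequence
open scoped Pointwise

variable {R}

variable (R) in
/-- The codepth `ht q - depth M_q` is bounded as `q` varies. -/
def HasBoundedCodepth (M : Type u) [AddCommGroup M] [Module R M] : Prop :=
  ∃ n : ℕ, ∀ q : PrimeSpectrum R, CodepthLE q n M

lemma localDepthGE_quotient_of_not_le {p q : PrimeSpectrum R} (hpq : ¬ p ≤ q) (n : ℕ) :
    LocalDepthGE q n (R ⧸ p.asIdeal) := by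
  obtain ⟨r, hrp, hrq⟩ := SetLike.not_le_iff_exists.1 (show ¬ p.asIdeal ≤ q.asIdeal from hpq)
  rw [← Ideal.annihilator_quotient (I := p.asIdeal), Module.mem_annihilator] at hrp
  exact .of_smul_eq_zero hrq hrp n

lemma isSMulRegular_quotient_of_notMem {p : PrimeSpectrum R} {s : R} (hs : s ∉ p.asIdeal) :
    IsSMulRegular (R ⧸ p.asIdeal) s :=
  (isSMulRegular_quotient_iff_mem_of_smul_mem _ _).2
    fun _ hx => (p.2.mem_or_mem hx).resolve_left hs

variable [IsNoetherianRing R]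

lemma induction_on_of_le_annihilator
    {motive : (N : Type u) → [AddCommGroup N] → [Module R N] → [Module.Finite R N] → Prop}
    (J : Ideal R)
    (subsingleton : ∀ (N : Type u) [AddCommGroup N] [Module R N] [Module.Finite R N]
      [Subsingleton N], motive N)
    (quotient : ∀ (N : Type u) [AddCommGroup N] [Module R N] [Module.Finite R N]
      (P : PrimeSpectrum R), J ≤ P.asIdeal → (N ≃ₗ[R] R ⧸ P.asIdeal) → motive N)
    (extension : ∀ (A : Type u) [AddCommGroup A] [Module R A] [Module.Finite R A]
      (B : Type u) [AddCommGroup B] [Module R B] [Module.Finite R B]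
      (C : Type u) [AddCommGroup C] [Module R C] [Module.Finite R C]
      (f : A →ₗ[R] B) (g : B →ₗ[R] C), IsSES f g → motive A → motive C → motive B)
    (M : Type u) [AddCommGroup M] [Module R M] [hM : Module.Finite R M] :
    J ≤ Module.annihilator R M → motive M := by
  induction hM using IsNoetherianRing.induction_on_isQuotientEquivQuotientPrime R with
  | subsingleton N => exact fun _ => subsingleton N
  | quotient N P e =>
    refine fun hJ => quotient N P ?_ e
    rwa [e.annihilator_eq, Ideal.annihilator_quotient] at hJ
  | exact A B C f g hf hg hfg ihA ihC =>
    exact fun hJ => extension A B C f g (isSES_iff_exact.2 ⟨hf, hg, hfg⟩)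
      (ihA (hJ.trans (f.annihilator_le_of_injective hf)))
      (ihC (hJ.trans (g.annihilator_le_of_surjective hg)))

lemma HasBoundedCodepth.of_le_annihilator (J : Ideal R)
    (hJ : ∀ P : PrimeSpectrum R, J ≤ P.asIdeal → HasBoundedCodepth R (R ⧸ P.asIdeal))
    (M : Type u) [AddCommGroup M] [Module R M] [Module.Finite R M]
    (hM : J ≤ Module.annihilator R M) : HasBoundedCodepth R M := by
  refine @induction_on_of_le_annihilator R _ _ (fun N _ _ _ => HasBoundedCodepth R N) J
    ?_ ?_ ?_ M _ _ _ hM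
  · intro N _ _ _ _
    exact ⟨0, fun q => .of_smul_eq_zero q.2.one_notMem (fun _ => Subsingleton.elim _ _) _⟩
  · intro N _ _ _ P hP e
    obtain ⟨n, hn⟩ := hJ P hP
    exact ⟨n, fun q => .of_linearEquiv e (hn q)⟩
  · rintro A _ _ _ B _ _ _ C _ _ _ f g h ⟨nA, hA⟩ ⟨nC, hC⟩
    exact ⟨max nA nC, fun q => .middle h (.mono (Nat.sub_le_sub_left (le_max_left _ _) _) (hA q))
      (.mono (Nat.sub_le_sub_left (le_max_right _ _) _) (hC q))⟩

lemma exists_notMem_forall_localDepthGE {p : PrimeSpectrum R}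
    (M : Type u) [AddCommGroup M] [Module R M] [Module.Finite R M]
    (hM : ∀ q < p, ¬ Module.annihilator R M ≤ q.asIdeal) :
    ∃ s ∉ p.asIdeal, ∀ q : PrimeSpectrum R, s ∉ q.asIdeal →
      ∀ n, LocalDepthGE q n (R ⧸ p.asIdeal) → LocalDepthGE q n M := by
  refine @induction_on_of_le_annihilator R _ _ (fun N _ _ _ => ∃ s ∉ p.asIdeal,
      ∀ q : PrimeSpectrum R, s ∉ q.asIdeal →
        ∀ n, LocalDepthGE q n (R ⧸ p.asIdeal) → LocalDepthGE q n N)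
    (Module.annihilator R M) ?_ ?_ ?_ M _ _ _ le_rfl
  · intro N _ _ _ _
    exact ⟨1, p.2.one_notMem, fun q hq n _ =>
      .of_smul_eq_zero hq (fun _ => Subsingleton.elim _ _) n⟩
  · intro N _ _ _ P hP e
    obtain rfl | hne := eq_or_ne P p
    · exact ⟨1, P.2.one_notMem, fun q _ n hn => .of_linearEquiv e hn⟩
    · have hPp : ¬ P ≤ p := fun hle => hM P (hle.lt_of_ne hne) hP
      obtain ⟨s, hsP, hsp⟩ := SetLike.not_le_iff_exists.1 (show ¬ P.asIdeal ≤ p.asIdeal from hPp)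
      exact ⟨s, hsp, fun q hq n _ =>
        .of_linearEquiv e (localDepthGE_quotient_of_not_le (fun hPq => hq (hPq hsP)) n)⟩
  · rintro A _ _ _ B _ _ _ C _ _ _ f g h ⟨s, hs, hA⟩ ⟨t, ht, hC⟩
    refine ⟨s * t, p.2.mul_notMem hs ht, fun q hq n hn => .middle h (hA q ?_ n hn) (hC q ?_ n hn)⟩
    · exact fun hsq => hq (Ideal.mul_mem_right _ _ hsq)
    · exact fun htq => hq (Ideal.mul_mem_left _ _ htq)

lemma exists_ideal_injective_forall_codepthLE
    (hCM : ∀ p : PrimeSpectrum R, IsCMLocalRing (RingAt p)) (p : PrimeSpectrum R) :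
    ∃ (I : Ideal R) (i : (R ⧸ p.asIdeal) →ₗ[R] R ⧸ I), Function.Injective i ∧
      (∀ q ≥ p, CodepthLE q (natHeight p) (R ⧸ I)) ∧ ∀ q < p, ¬ I ≤ q.asIdeal := by
  obtain ⟨rs, hlen, hmem, hreg⟩ := le_depthE_iff.1 ((le_gradeE_iff hCM (p := p)).2 le_rfl)
  let I : Ideal R := Ideal.ofList rs • ⊤
  have hdepth (q : PrimeSpectrum R) (hpq : p ≤ q) {n : ℕ} :
      LocalDepthGE q n (R ⧸ I) ↔ n + natHeight p ≤ natHeight q := by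
    rw [localDepthGE_quotient_ofList_iff (fun r hr => hpq (hmem r hr)) hreg, hlen,
      localDepthGE_self_iff (hCM q)]
  have hass : p.asIdeal ∈ associatedPrimes R (R ⧸ I) := by
    by_contra hp
    have := (hdepth p le_rfl).1 (.of_notMem_associatedPrimes hp)
    omega
  obtain ⟨-, i, hi⟩ := (isAssociatedPrime_iff_exists_injective_linearMap _ _).1 hass
  refine ⟨I, i, hi, fun q hpq => (hdepth q hpq).2 ?_, fun q hqp hle => ?_⟩
  · have := natHeight_strictMono.monotone hpq
    omega
  · have hle' : Ideal.ofList rs ≤ q.asIdeal := by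
      simpa only [I, smul_eq_mul, Ideal.mul_top] using hle
    have hrs : LocalDepthGE q rs.length R :=
      localDepthGE_of_isWeaklyRegular (fun r hr => hle' (Ideal.subset_span hr)) hreg
    have := (localDepthGE_self_iff (hCM q)).1 hrs
    have := natHeight_strictMono hqp
    omega

lemma exists_notMem_forall_codepthLE_quotient
    (hCM : ∀ p : PrimeSpectrum R, IsCMLocalRing (RingAt p)) (p : PrimeSpectrum R) :
    ∃ s ∉ p.asIdeal, ∀ q : PrimeSpectrum R, s ∉ q.asIdeal →
      CodepthLE q (natHeight p) (R ⧸ p.asIdeal) := by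
  obtain ⟨I, i, hi, hI, hnot⟩ := exists_ideal_injective_forall_codepthLE hCM p
  have hann : I ≤ Module.annihilator R ((R ⧸ I) ⧸ LinearMap.range i) :=
    Ideal.annihilator_quotient.ge.trans
      ((LinearMap.range i).mkQ.annihilator_le_of_surjective (Submodule.mkQ_surjective _))
  obtain ⟨s, hs, hdepth⟩ :=
    exists_notMem_forall_localDepthGE _ fun q hqp hle => hnot q hqp (hann.trans hle)
  refine ⟨s, hs, fun q hsq => ?_⟩
  by_cases hpq : p ≤ q
  swap
  · exact localDepthGE_quotient_of_not_le hpq _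
  have (n : ℕ) (hn : n ≤ natHeight q - natHeight p) : LocalDepthGE q n (R ⧸ p.asIdeal) := by
    induction n with
    | zero => exact .zero
    | succ n ih =>
      exact .left (isSES_mkQ_range hi) ((hI q hpq).mono hn) (hdepth q hsq n (ih (by omega)))
  exact this _ le_rfl

lemma hasBoundedCodepth_quotient (hCM : ∀ p : PrimeSpectrum R, IsCMLocalRing (RingAt p))
    (p : PrimeSpectrum R) : HasBoundedCodepth R (R ⧸ p.asIdeal) := by
  have := wellFoundedGT_primeSpectrum R
  induction p using WellFoundedGT.induction with
  | ind p ih =>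
    obtain ⟨s, hs, hgeneric⟩ := exists_notMem_forall_codepthLE_quotient hCM p
    obtain ⟨n, hn⟩ : HasBoundedCodepth R (QuotSMulTop s (R ⧸ p.asIdeal)) := by
      refine .of_le_annihilator (p.asIdeal ⊔ Ideal.span {s}) (fun P hP => ih P ?_) _ ?_
      · have hsP : s ∈ P.asIdeal := hP (Ideal.mem_sup_right (Ideal.mem_span_singleton_self s))
        exact lt_of_le_not_ge (le_sup_left.trans hP) fun hle => hs (hle hsP)
      · refine sup_le ?_ ((Ideal.span_singleton_le_iff_mem _).2 (QuotSMulTop.mem_annihilator _ s))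
        exact Ideal.annihilator_quotient.ge.trans
          (LinearMap.annihilator_le_of_surjective _ (Submodule.mkQ_surjective _))
    refine ⟨max (natHeight p) n, fun q => ?_⟩
    by_cases hsq : s ∈ q.asIdeal
    · exact .mono (by omega) ((localDepthGE_quotSMulTop_iff hsq
        (isSMulRegular_quotient_of_notMem hs)).1 (hn q))
    · exact .mono (by omega) (hgeneric q hsq)

lemma hasBoundedCodepth (hCM : ∀ p : PrimeSpectrum R, IsCMLocalRing (RingAt p))
    (M : Type u) [AddCommGroup M] [Module R M] [Module.Finite R M] : HasBoundedCodepth R M :=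
  .of_le_annihilator ⊥ (fun P _ => hasBoundedCodepth_quotient hCM P) M bot_le

end BoundedCodepth

section PsiDominant

variable {R}

lemma exists_surjective_ker_le_maximalIdeal_smul {S M : Type u} [CommRing S] [IsLocalRing S]
    [AddCommGroup M] [Module S M] [Module.Finite S M] :
    ∃ (n : ℕ) (g : (Fin n → S) →ₗ[S] M), Function.Surjective g ∧
      LinearMap.ker g ≤ IsLocalRing.maximalIdeal S • (⊤ : Submodule S (Fin n → S)) := by
  let b := Module.finBasis (IsLocalRing.ResidueField S)
    (TensorProduct S (IsLocalRing.ResidueField S) M)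
  choose t ht using fun i => TensorProduct.mk_surjective S M (IsLocalRing.ResidueField S)
    IsLocalRing.residue_surjective (b i)
  refine ⟨_, Fintype.linearCombination S t, ?_, fun v hv => ?_⟩
  · rw [← LinearMap.range_eq_top, Fintype.range_linearCombination]
    exact IsLocalRing.span_eq_top_of_tmul_eq_basis t b ht
  · have hsum : ∑ i, IsLocalRing.residue S (v i) • b i = 0 := by
      simp_rw [← ht, ← IsLocalRing.ResidueField.algebraMap_eq, algebraMap_smul, ← map_smul,
        ← map_sum, ← Fintype.linearCombination_apply]
      rw [LinearMap.mem_ker.1 hv, map_zero]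
    rw [pi_eq_sum_univ' v]
    exact Submodule.sum_mem _ fun i _ => Submodule.smul_mem_smul
      ((IsLocalRing.residue_eq_zero_iff _).1
        (Fintype.linearIndependent_iff.1 b.linearIndependent _ hsum i)) trivial

lemma exists_isMinSyz {S : Type u} [CommRing S] [IsLocalRing S] [IsNoetherianRing S] (n : ℕ)
    (M : ModuleCat.{u} S) [Module.Finite S M] : ∃ K, IsMinSyz S n M K := by
  induction n generalizing M with
  | zero => exact ⟨M, ⟨LinearEquiv.refl S M⟩⟩
  | succ n ih =>
    obtain ⟨m, g, hg, hker⟩ := exists_surjective_ker_le_maximalIdeal_smul (S := S) (M := M)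
    obtain ⟨K, hK⟩ := ih (ModuleCat.of S (LinearMap.ker g))
    exact ⟨K, ModuleCat.of S (Fin m → S), g, ModuleCat.of S (LinearMap.ker g),
      (LinearMap.ker g).subtype, inferInstanceAs (Module.Finite S (Fin m → S)),
      inferInstanceAs (Module.Free S (Fin m → S)), hg, hker, Subtype.val_injective,
      Submodule.range_subtype _, hK⟩

variable [IsNoetherianRing R]

lemma mem_iterate_syzPreimage_psiDepth (hCM : ∀ p : PrimeSpectrum R, IsCMLocalRing (RingAt p))
    (f : PrimeSpectrum R → ℕ) {n : ℕ} {M : Type u} [AddCommGroup M] [Module R M]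
    [Module.Finite R M] (hM : ∀ q : PrimeSpectrum R, CodepthLE q n M) :
    Mem (syzPreimage^[n] (psiDepth R f)) M := by
  induction n generalizing M with
  | zero =>
    exact mem_psiDepth_iff.2 ⟨inferInstanceAs (Module.Finite R M),
      fun q => .mono (by omega) (hM q)⟩
  | succ n ih =>
    obtain ⟨P, π, _, _, hπ⟩ := exists_finite_projective_surjective (S := R) M
    rw [Function.iterate_succ_apply']
    have hses := isSES_ker_subtype hπ
    refine ((isResolving_psiDepth hCM f).iterate_syzPreimage n).mem_syzPreimage_of_isSES
      hses (ih fun q => ?_)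
    exact .syzygy hses (.mono (Nat.sub_le _ _) (.of_projective hCM q P)) (hM q)

lemma IsResolving.mem_iterate_syzPreimage_localizeAt {𝒳 : Set (ModuleCat.{u} R)}
    (h𝒳 : IsResolving R 𝒳) (p : PrimeSpectrum R) {n : ℕ} {M : Type u} [AddCommGroup M]
    [Module R M] (hM : Mem (syzPreimage^[n] 𝒳) M) :
    Mem (syzPreimage^[n] (localizeAt 𝒳 p)) (ModuleAt M p) := by
  induction n generalizing M with
  | zero => exact mem_localizeAt p hM
  | succ n ih =>
    rw [Function.iterate_succ_apply'] at hM ⊢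
    obtain ⟨P, π, _, _, hπ, hK⟩ := hM
    have : Module.Projective (RingAt p) (ModuleAt P p) :=
      Module.projective_of_isLocalizedModule p.asIdeal.primeCompl
        (LocalizedModule.mkLinearMap p.asIdeal.primeCompl P)
    exact ((h𝒳.localizeAt p).iterate_syzPreimage n).mem_syzPreimage_of_isSES
      (isSES_ker_subtype hπ).mapAt (ih hK)

lemma dominant_psiDepth (hCM : ∀ p : PrimeSpectrum R, IsCMLocalRing (RingAt p))
    (f : PrimeSpectrum R → ℕ) : Dominant R (psiDepth R f) := by
  intro p _
  have hψ := isResolving_psiDepth hCM f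
  have hψp := hψ.localizeAt p
  obtain ⟨M, _, ⟨e⟩⟩ := exists_finite_linearEquiv_moduleAt p (IsLocalRing.ResidueField (RingAt p))
  obtain ⟨n, hn⟩ := hasBoundedCodepth hCM M
  have hM := hψ.mem_iterate_syzPreimage_localizeAt p (mem_iterate_syzPreimage_psiDepth hCM f hn)
  have hκ := (hψp.iterate_syzPreimage n).mem_of_linearEquiv e hM
  obtain ⟨K, hK⟩ := exists_isMinSyz n (residueMod (RingAt p))
  exact ⟨n, K, hK, (memAddLocal_iff_mem_localizeAt hψ).2 ((hψp.mem_iff_of_isMinSyz hK).2 hκ)⟩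

end PsiDominant

section SmulDiag

variable {R} {m : ℕ}

/-- The map `T → T ^ m`, `t ↦ (x₁ t, …, xₘ t)`, of multiplication by a finite sequence `x`. -/
noncomputable def smulDiag (x : Fin m → R) (T : Type u) [AddCommGroup T] [Module R T] :
    T →ₗ[R] Fin m → T :=
  ∑ i, x i • LinearMap.single R (fun _ => T) i

variable {x : Fin m → R} {T : Type u} [AddCommGroup T] [Module R T]

lemma smulDiag_apply (t : T) (i : Fin m) : smulDiag x T t i = x i • t := by
  simp [smulDiag, Pi.single_apply]

lemma smulDiag_mem_smul {I : Ideal R} (hx : ∀ i, x i ∈ I) :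
    smulDiag x T ∈ I • (⊤ : Submodule R (T →ₗ[R] Fin m → T)) :=
  Submodule.sum_mem _ fun i _ => Submodule.smul_mem_smul (hx i) trivial

lemma smulDiag_injective {y : R} (hy : y ∈ Ideal.span (Set.range x)) (hreg : IsSMulRegular T y) :
    Function.Injective (smulDiag x T) := by
  obtain ⟨c, rfl⟩ := (Submodule.mem_span_range_iff_exists_fun R).1 hy
  refine (injective_iff_map_eq_zero _).2 fun t ht => hreg.right_eq_zero_of_smul ?_
  have hxt (i : Fin m) : x i • t = 0 := by rw [← smulDiag_apply, ht, Pi.zero_apply]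
  rw [Finset.sum_smul]
  exact Finset.sum_eq_zero fun i _ => by rw [smul_assoc, hxt, smul_zero]

/-- On the cokernel of `smulDiag x T`, multiplication by `x i` factors through `T ^ m` via
`v ↦ x i • v - x • v i`. -/
lemma LocalDepthGE.coker_smulDiag [IsNoetherianRing R] [Module.Finite R T] {q : PrimeSpectrum R}
    {n : ℕ} (hT : LocalDepthGE q n T) {i : Fin m} (hi : x i ∉ q.asIdeal) :
    LocalDepthGE q n ((Fin m → T) ⧸ LinearMap.range (smulDiag x T)) := by
  let b : (Fin m → T) →ₗ[R] Fin m → T := x i • LinearMap.id - smulDiag x T ∘ₗ LinearMap.proj i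
  have hb : LinearMap.range (smulDiag x T) ≤ LinearMap.ker b := by
    rintro _ ⟨t, rfl⟩
    ext k
    simp [b, smulDiag_apply, smul_comm (x i)]
  refine .of_smul_retract hi ((LinearMap.range _).liftQ b hb) (LinearMap.range _).mkQ
    (fun v => ?_) (.pi hT m)
  obtain ⟨v, rfl⟩ := Submodule.mkQ_surjective _ v
  have hv : (LinearMap.range (smulDiag x T)).mkQ (smulDiag x T (v i)) = 0 :=
    (Submodule.Quotient.mk_eq_zero _).2 ⟨_, rfl⟩
  change (LinearMap.range _).mkQ (x i • v - smulDiag x T (v i)) = _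
  rw [map_sub, hv, sub_zero, map_smul]

end SmulDiag

section Sharpness

variable {R}

/-- `T` has codepth exactly `j` at `p`, at most `j` on `V(p)`, and `0` outside `V(p)`. -/
structure HasCodepthAlong (p : PrimeSpectrum R) (j : ℕ) (T : Type u) [AddCommGroup T]
    [Module R T] : Prop where
  codepthLE_zero : ∀ q, ¬ p ≤ q → CodepthLE q 0 T
  codepthLE : ∀ q ≥ p, CodepthLE q j T
  not_localDepthGE : ¬ LocalDepthGE p (natHeight p - j + 1) T

variable [IsNoetherianRing R] {p : PrimeSpectrum R}

lemma HasCodepthAlong.coker_smulDiag {j : ℕ} {T : Type u} [AddCommGroup T] [Module R T]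
    [Module.Finite R T] (hT : HasCodepthAlong p j T) (hj : j < natHeight p) {m : ℕ}
    {x : Fin m → R} (hx : Ideal.span (Set.range x) = p.asIdeal) :
    HasCodepthAlong p (j + 1) ((Fin m → T) ⧸ LinearMap.range (smulDiag x T)) := by
  have hheight (q : PrimeSpectrum R) (hq : p ≤ q) : natHeight p ≤ natHeight q :=
    natHeight_strictMono.monotone hq
  obtain ⟨y, hy, hreg⟩ : ∃ y ∈ p.asIdeal, IsSMulRegular T y :=
    exists_mem_isSMulRegular_of_localDepthGE_one fun q hq =>
      .mono (by have := hheight q hq; omega) (hT.codepthLE q hq)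
  have hses := isSES_mkQ_range (smulDiag_injective (hx ▸ hy) hreg)
  refine ⟨fun q hq => ?_, fun q hq => ?_, fun h => hT.not_localDepthGE ?_⟩
  · obtain ⟨i, hi⟩ : ∃ i, x i ∉ q.asIdeal := by
      by_contra! hxq
      refine hq (show p.asIdeal ≤ q.asIdeal from ?_)
      rw [← hx, Ideal.span_le]
      rintro _ ⟨i, rfl⟩
      exact hxq i
    exact (hT.codepthLE_zero q hq).coker_smulDiag hi
  · have := hheight q hq
    exact .right hses (.pi (.mono (by omega) (hT.codepthLE q hq)) m)
      (.mono (by omega) (hT.codepthLE q hq))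
  · have hxp (i : Fin m) : x i ∈ p.asIdeal := hx ▸ Ideal.subset_span ⟨i, rfl⟩
    exact .mono (by omega) (.left_of_mem_smul hses (smulDiag_mem_smul hxp) h)

lemma exists_hasCodepthAlong (hCM : ∀ p : PrimeSpectrum R, IsCMLocalRing (RingAt p)) {j : ℕ}
    (hj : j ≤ natHeight p) :
    ∃ T : ModuleCat.{u} R, Module.Finite R T ∧ HasCodepthAlong p j T := by
  obtain ⟨m, x, hx⟩ :=
    Submodule.fg_iff_exists_fin_generating_family.1 (IsNoetherian.noetherian p.asIdeal)
  induction j with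
  | zero =>
    have hdepth (q : PrimeSpectrum R) (n : ℕ) := localDepthGE_self_iff (n := n) (hCM q)
    refine ⟨ModuleCat.of R R, inferInstanceAs (Module.Finite R R), fun q _ => ?_, fun q _ => ?_,
      fun h => ?_⟩
    · exact (hdepth q _).2 le_rfl
    · exact (hdepth q _).2 le_rfl
    · have := (hdepth p _).1 h
      omega
  | succ j ih =>
    obtain ⟨T, _, hT⟩ := ih (by omega)
    exact ⟨ModuleCat.of R ((Fin m → T) ⧸ LinearMap.range (smulDiag x T)),
      inferInstanceAs (Module.Finite R (_ ⧸ _)), hT.coker_smulDiag hj hx⟩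

theorem isLeastDepth_psiDepth (hCM : ∀ p : PrimeSpectrum R, IsCMLocalRing (RingAt p))
    {f : PrimeSpectrum R → ℕ} (hf : GradeConsistent R f) (p : PrimeSpectrum R) :
    IsLeastDepth (psiDepth R f) p (natHeight p - f p) := by
  obtain ⟨T, _, hT⟩ := exists_hasCodepthAlong hCM ((le_gradeE_iff hCM).1 (hf.1 p))
  refine ⟨fun X hX => (mem_psiDepth_iff.1 hX).2 p, T,
    mem_psiDepth_iff.2 ⟨inferInstance, fun q => ?_⟩, hT.not_localDepthGE⟩
  by_cases hpq : p ≤ q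
  · exact .mono (Nat.sub_le_sub_left (hf.2 p q hpq) _) (hT.codepthLE q hpq)
  · exact .mono (Nat.sub_le_sub_left (Nat.zero_le _) _) (hT.codepthLE_zero q hpq)

theorem eq_heightE_sub_iInf_localDepth_psiDepth
    (hCM : ∀ p : PrimeSpectrum R, IsCMLocalRing (RingAt p)) {f : PrimeSpectrum R → ℕ}
    (hf : GradeConsistent R f) (p : PrimeSpectrum R) :
    (f p : ℕ∞) = heightE R p - ⨅ X ∈ psiDepth R f, localDepth R p X := by
  have hfp : f p ≤ natHeight p := (le_gradeE_iff hCM).1 (hf.1 p)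
  rw [(isLeastDepth_psiDepth hCM hf p).iInf_eq, ← coe_natHeight, ← ENat.natCast_sub,
    Nat.sub_sub_self hfp]

end Sharpness

/-- Theorem 1.3: over a Cohen-Macaulay ring, `φ` and `ψ` are mutually inverse bijections
between the dominant resolving subcategories of `mod R` and the grade consistent
functions on `Spec R`. -/
theorem dominant_resolving_classification [IsNoetherianRing R]
    (hCM : ∀ p : PrimeSpectrum R, IsCMLocalRing (Localization.AtPrime p.asIdeal)) :
    (∀ 𝒳 : Set (ModuleCat.{u} R), IsResolving R 𝒳 → Dominant R 𝒳 →
      ∃ f : PrimeSpectrum R → ℕ, GradeConsistent R f ∧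
        (∀ p : PrimeSpectrum R,
          (f p : ℕ∞) = heightE R p - ⨅ X ∈ 𝒳, localDepth R p X) ∧
        psiDepth R f = 𝒳) ∧
    (∀ f : PrimeSpectrum R → ℕ, GradeConsistent R f →
      IsResolving R (psiDepth R f) ∧ Dominant R (psiDepth R f) ∧
      (∀ p : PrimeSpectrum R,
        (f p : ℕ∞) = heightE R p - ⨅ X ∈ psiDepth R f, localDepth R p X)) :=
  ⟨fun _ h𝒳 hdom => h𝒳.exists_gradeConsistent_psiDepth_eq hCM hdom,
    fun f hf => ⟨isResolving_psiDepth hCM f, dominant_psiDepth hCM f,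
      eq_heightE_sub_iInf_localDepth_psiDepth hCM hf⟩⟩

end ResolvPaper
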